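/- arXiv:0801.2505 — 3 statements merged into one kernel-verified Lean document; each statement's English description precedes it below -/
import Mathlib

section
/- For any two locally finite nonnegative Borel measures ν₁ and ν₂ on ℝ^d, the transportation distance and the dual distance coincide: Tra(ν₁, ν₂) = Di(ν₁, ν₂) as elements of [0, ∞]. In particular, for every locally finite nonnegative Borel measure ν on ℝ^d, Tra(ν) = D(ν). -/
/-!
If `γ` is a transportation whose support lies in `{|x - y| ≤ r}`, then
`ν₁ B = γ (B × ℝ^d) ≤ γ (ℝ^d × B_{+r}) = ν₂ (B_{+r})`, and symmetrically, so `Di ≤ Tra`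
(`Di_le_Tra`).

Conversely, let `r` satisfy the two inequalities defining `Di` and let `ε > 0`. Cut `ℝ^d` into cubes
of diameter at most `ε` and join two cubes when they contain points at distance less than `r + ε`.
This graph is locally finite, and the inequalities for finite unions of cubes are Hall's condition
in both directions for the masses `ν₁ Q` and `ν₂ Q`. Hence there is a flow along the edges that
exhausts the `ν₁`-masses without exceeding the `ν₂`-masses, and one with the roles exchanged
(`exists_half_flow`, by rounding, Hall's theorem and compactness). A Schröder–Bernstein argument for
flows, based on the Knaster–Tarski fixed point theorem, merges them into one flow with both marginals
prescribed (`exists_flow`). Spreading the flow between two cubes as a multiple of the product of the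
restricted measures (`glue`) gives a transportation supported in `{|x - y| ≤ r + 3 ε}`, so
`Tra ≤ Di`.
-/

open MeasureTheory Metric Set Bornology
open scoped ENNReal RealInnerProductSpace

noncomputable section

/-- `d`-dimensional Euclidean space. -/
abbrev Euc (d : ℕ) : Type := EuclideanSpace ℝ (Fin d)

/-- The closed support of a measure: the set of points all of whose neighbourhoods
have positive measure. -/
def msupport {X : Type*} [TopologicalSpace X] [MeasurableSpace X] (μ : Measure X) : Set X :=
  {x | ∀ U ∈ nhds x, μ U ≠ 0}

/-- `γ` is a transportation from `ν₁` to `ν₂`: a locally finite nonnegative Borel measure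
on the product whose first marginal is `ν₁` and whose second marginal is `ν₂`. -/
def IsTransport {d : ℕ} (ν₁ ν₂ : Measure (Euc d)) (γ : Measure (Euc d × Euc d)) : Prop :=
  IsLocallyFiniteMeasure γ ∧ γ.map Prod.fst = ν₁ ∧ γ.map Prod.snd = ν₂

/-- The transportation distance `Tra(ν₁, ν₂)`: the infimum over all transportations `γ`
of `sup {|x−y| : (x,y) ∈ spt γ}`, with value `∞` if no transportation exists. -/
def Tra {d : ℕ} (ν₁ ν₂ : Measure (Euc d)) : ℝ≥0∞ :=
  ⨅ γ : {γ : Measure (Euc d × Euc d) // IsTransport ν₁ ν₂ γ},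
    ⨆ p ∈ msupport γ.1, edist p.1 p.2

/-- The dual distance `Di(ν₁, ν₂)`: the infimum of those `r ∈ (0,∞)` such that
`ν₁ B ≤ ν₂ (B_{+r})` and `ν₂ B ≤ ν₁ (B_{+r})` for every bounded Borel set `B`,
where `B_{+r}` is the closed `r`-neighbourhood of `B` (`inf ∅ = ∞`). -/
def Di {d : ℕ} (ν₁ ν₂ : Measure (Euc d)) : ℝ≥0∞ :=
  sInf (ENNReal.ofReal ''
    {r : ℝ | 0 < r ∧ ∀ B : Set (Euc d), IsBounded B → MeasurableSet B →
      ν₁ B ≤ ν₂ (cthickening r B) ∧ ν₂ B ≤ ν₁ (cthickening r B)})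

/-- The normalized indicator `χ_r` of the closed ball of radius `r` centered at the origin. -/
def chi (d : ℕ) (r : ℝ) (x : Euc d) : ℝ :=
  (volume (closedBall (0 : Euc d) r)).toReal⁻¹ * (closedBall (0 : Euc d) r).indicator 1 x

/-- The convolution `v * χ_r` of a vector field `v` with the normalized indicator `χ_r`. -/
def convChi {d : ℕ} (v : Euc d → Euc d) (r : ℝ) (x : Euc d) : Euc d :=
  ∫ y, chi d r (x - y) • v y

/-- `Ra(v) = inf_{r>0} { r + ‖v * χ_r‖_∞ }`. -/
def Ra {d : ℕ} (v : Euc d → Euc d) : ℝ≥0∞ :=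
  ⨅ (r : ℝ) (_ : 0 < r),
    ENNReal.ofReal r + essSup (fun x => (‖convChi v r x‖₊ : ℝ≥0∞)) volume

/-- `R̃a(v) = inf_{r>0} { r + ‖ |v| * χ_r ‖_∞ }`. -/
def RaTilde {d : ℕ} (v : Euc d → Euc d) : ℝ≥0∞ :=
  ⨅ (r : ℝ) (_ : 0 < r),
    ENNReal.ofReal r +
      essSup (fun x => ∫⁻ y, ENNReal.ofReal (chi d r (x - y)) * (‖v y‖₊ : ℝ≥0∞)) volume

/-- The vector field `v` connects the measures `ν` and `m_d`: `div v = ν − m_d` weakly,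
i.e. `∫ ⟨v, ∇φ⟩ dm_d = −∫ φ d(ν − m_d)` for all smooth compactly supported `φ`. -/
def Connects {d : ℕ} (v : Euc d → Euc d) (ν : Measure (Euc d)) : Prop :=
  ∀ φ : Euc d → ℝ, ContDiff ℝ (⊤ : ℕ∞) φ → HasCompactSupport φ →
    ∫ x, ⟪v x, gradient φ x⟫ ∂volume = (∫ x, φ x ∂volume) - ∫ x, φ x ∂ν

/-- The Laplacian of `u : ℝ^d → ℝ`, as the sum of the second partial derivatives
along the coordinate directions. -/
def lap {d : ℕ} (u : Euc d → ℝ) (x : Euc d) : ℝ :=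
  ∑ i : Fin d,
    fderiv ℝ (fun y => fderiv ℝ u y (EuclideanSpace.single i (1 : ℝ))) x
      (EuclideanSpace.single i (1 : ℝ))

/-- The unit lattice cube `∏ i [aᵢ, aᵢ+1]` with integer corner `a`. -/
def latticeCube {d : ℕ} (a : Fin d → ℤ) : Set (Euc d) :=
  {x | ∀ i, (a i : ℝ) ≤ x i ∧ x i ≤ (a i : ℝ) + 1}

/-- `U` is a finite union of unit lattice cubes. -/
def IsFiniteUnionUnitCubes {d : ℕ} (U : Set (Euc d)) : Prop :=
  ∃ s : Finset (Fin d → ℤ), U = ⋃ a ∈ s, latticeCube a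

/-- `U_{+F} = {x : ∃ y ∈ U, (x,y) ∈ F}`. -/
def plusF {d : ℕ} (F : Set (Euc d × Euc d)) (U : Set (Euc d)) : Set (Euc d) :=
  {x | ∃ y ∈ U, (x, y) ∈ F}

/-- The point of `ℝ^d` with integer coordinates `z ∈ ℤ^d`. -/
def latticePoint {d : ℕ} (z : Fin d → ℤ) : Euc d :=
  (WithLp.equiv 2 (Fin d → ℝ)).symm fun i => (z i : ℝ)

/-- The uniform probability measure on the closed unit ball centered at `x`. -/
def eta {d : ℕ} (x : Euc d) : Measure (Euc d) :=
  (volume (closedBall x 1))⁻¹ • volume.restrict (closedBall x 1)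

/-- The measure `ν * χ_r`, with density `x ↦ ∫ χ_r(x−y) dν(y)` w.r.t. Lebesgue measure. -/
def convMeasure {d : ℕ} (ν : Measure (Euc d)) (r : ℝ) : Measure (Euc d) :=
  volume.withDensity fun x => ∫⁻ y, ENNReal.ofReal (chi d r (x - y)) ∂ν

/-! ### Flows with prescribed marginals on locally finite bipartite graphs -/

/-- Integral one-sided flow: replacing each vertex by as many copies as its capacity turns the
capacity condition into Hall's marriage condition. -/
lemma exists_nat_flow {ι κ : Type*} [DecidableEq ι] [DecidableEq κ] (A : ι → ℕ) (B : κ → ℕ)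
    (N : ι → Finset κ)
    (hall : ∀ I : Finset ι, ∑ i ∈ I, A i ≤ ∑ j ∈ I.biUnion N, B j) :
    ∃ g : ι → κ → ℕ, (∀ i j, j ∉ N i → g i j = 0) ∧ (∀ i, ∑ j ∈ N i, g i j = A i) ∧
      ∀ (j) (I : Finset ι), ∑ i ∈ I, g i j ≤ B j := by
  classical
  let t : (Σ i, Fin (A i)) → Finset (Σ j, Fin (B j)) := fun x => (N x.1).sigma fun _ => Finset.univ
  have h : ∃ F : (Σ i, Fin (A i)) → (Σ j, Fin (B j)), Function.Injective F ∧ ∀ x, F x ∈ t x := by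
    rw [← Finset.all_card_le_biUnion_card_iff_exists_injective]
    intro s
    have h1 : s ⊆ (s.image Sigma.fst).sigma fun _ => Finset.univ := by
      intro x hx
      simp only [Finset.mem_sigma, Finset.mem_univ, and_true]
      exact Finset.mem_image_of_mem _ hx
    have h2 : s.biUnion t = ((s.image Sigma.fst).biUnion N).sigma fun _ => Finset.univ := by
      ext y
      simp only [t, Finset.mem_biUnion, Finset.mem_sigma, Finset.mem_univ, and_true,
        Finset.mem_image]
      constructor
      · rintro ⟨x, hx, hy⟩
        exact ⟨x.1, ⟨x, hx, rfl⟩, hy⟩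
      · rintro ⟨_, ⟨x, hx, rfl⟩, hy⟩
        exact ⟨x, hx, hy⟩
    refine (Finset.card_le_card h1).trans ?_
    rw [h2, Finset.card_sigma, Finset.card_sigma]
    simpa using hall (s.image Sigma.fst)
  obtain ⟨F, hF, hFt⟩ := h
  have hN : ∀ i k, (F ⟨i, k⟩).1 ∈ N i := fun i k => by
    simpa [t] using hFt ⟨i, k⟩
  refine ⟨fun i j => (Finset.univ.filter fun k : Fin (A i) => (F ⟨i, k⟩).1 = j).card,
    ?_, ?_, ?_⟩
  · intro i j hj
    rw [Finset.card_eq_zero, Finset.filter_eq_empty_iff]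
    rintro k - rfl
    exact hj (hN i k)
  · intro i
    rw [← Finset.card_eq_sum_card_fiberwise (f := fun k : Fin (A i) => (F ⟨i, k⟩).1)
      (s := Finset.univ) (t := N i) (fun k _ => hN i k)]
    simp
  · intro j I
    rw [← Finset.card_sigma]
    have : (({j} : Finset κ).sigma fun j => (Finset.univ : Finset (Fin (B j)))).card = B j := by
      simp
    rw [← this]
    refine Finset.card_le_card_of_injOn (fun x => F x) ?_ hF.injOn
    intro x hx
    simp only [Finset.coe_sigma, Finset.mem_coe, Finset.mem_filter,
      Finset.mem_univ, true_and, Finset.mem_singleton, and_true, Set.mem_sigma_iff] at hx ⊢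
    exact hx.2

/-- Real one-sided flow. The masses are multiplied by `n`, rounded down on the left and up on the
right (which preserves the Hall condition), and the resulting integral flows divided by `n`
converge along an ultrafilter, since `ℝ≥0∞` is compact. -/
lemma exists_half_flow {ι κ : Type*} [DecidableEq ι] [DecidableEq κ] (a : ι → ℝ) (b : κ → ℝ)
    (ha : ∀ i, 0 ≤ a i) (hb : ∀ j, 0 ≤ b j) (N : ι → Finset κ)
    (hall : ∀ I : Finset ι, ∑ i ∈ I, a i ≤ ∑ j ∈ I.biUnion N, b j) :
    ∃ f : ι → κ → ℝ≥0∞, (∀ i j, j ∉ N i → f i j = 0) ∧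
      (∀ i, ∑' j, f i j = ENNReal.ofReal (a i)) ∧
      ∀ j, ∑' i, f i j ≤ ENNReal.ofReal (b j) := by
  have key : ∀ n : ℕ, ∃ g : ι → κ → ℕ, (∀ i j, j ∉ N i → g i j = 0) ∧
      (∀ i, ∑ j ∈ N i, g i j = ⌊a i * n⌋₊) ∧
      ∀ (j) (I : Finset ι), ∑ i ∈ I, g i j ≤ ⌈b j * n⌉₊ := by
    intro n
    refine exists_nat_flow _ _ N fun I => ?_
    have : ((∑ i ∈ I, ⌊a i * n⌋₊ : ℕ) : ℝ) ≤ ((∑ j ∈ I.biUnion N, ⌈b j * n⌉₊ : ℕ) : ℝ) := by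
      push_cast
      calc ∑ i ∈ I, (⌊a i * n⌋₊ : ℝ) ≤ ∑ i ∈ I, a i * n :=
            Finset.sum_le_sum fun i _ => Nat.floor_le (mul_nonneg (ha i) n.cast_nonneg)
        _ = (∑ i ∈ I, a i) * n := by rw [Finset.sum_mul]
        _ ≤ (∑ j ∈ I.biUnion N, b j) * n := by gcongr; exact hall I
        _ = ∑ j ∈ I.biUnion N, b j * n := by rw [Finset.sum_mul]
        _ ≤ _ := Finset.sum_le_sum fun j _ => Nat.le_ceil _
    exact_mod_cast this
  choose g hg0 hgr hgc using key
  let U : Ultrafilter ℕ := Filter.hyperfilter ℕ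
  have hU : (U : Filter ℕ) ≤ Filter.atTop := by
    rw [← Nat.cofinite_eq_atTop]; exact Filter.hyperfilter_le_cofinite
  let u : ι → κ → ℕ → ℝ≥0∞ := fun i j n => ENNReal.ofReal ((g n i j : ℝ) / n)
  have hlim : ∀ i j, ∃ l, Filter.Tendsto (u i j) U (nhds l) := fun i j =>
    ⟨(U.map (u i j)).lim, (U.map (u i j)).le_nhds_lim⟩
  choose f hf using hlim
  have h0 : ∀ i j, j ∉ N i → f i j = 0 := by
    intro i j hj
    refine tendsto_nhds_unique (hf i j) ?_
    simp [u, hg0 _ i j hj]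
  have hinf := tendsto_natCast_atTop_atTop (R := ℝ)
  refine ⟨f, h0, fun i => ?_, fun j => ?_⟩
  · rw [tsum_eq_sum (s := N i) (fun j hj => h0 i j hj)]
    refine tendsto_nhds_unique (tendsto_finsetSum (N i) fun j _ => hf i j) ?_
    have : (fun n => ∑ j ∈ N i, u i j n) = fun n : ℕ => ENNReal.ofReal ((⌊a i * n⌋₊ : ℝ) / n) := by
      funext n
      rw [← hgr n i, ← ENNReal.ofReal_sum_of_nonneg (fun p _ => by positivity), ← Finset.sum_div]
      push_cast; rfl
    rw [this]
    exact (ENNReal.tendsto_ofReal ((tendsto_nat_floor_mul_div_atTop (ha i)).comp hinf)).mono_left hU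
  · rw [ENNReal.tsum_eq_iSup_sum]
    refine iSup_le fun I => ?_
    refine le_of_tendsto_of_tendsto (tendsto_finsetSum I fun i _ => hf i j)
      ((ENNReal.tendsto_ofReal
        ((tendsto_nat_ceil_mul_div_atTop (hb j)).comp hinf)).mono_left hU) ?_
    refine Filter.Eventually.of_forall fun n => ?_
    change ∑ i ∈ I, u i j n ≤ ENNReal.ofReal ((⌈b j * n⌉₊ : ℝ) / n)
    rw [← ENNReal.ofReal_sum_of_nonneg (fun p _ => by positivity), ← Finset.sum_div]
    refine ENNReal.ofReal_le_ofReal ?_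
    gcongr
    exact_mod_cast hgc n j I

/-- The kernel `f i j / a i` spreads a mass `α ≤ a` without loss, also where `a i = 0`. -/
lemma tsum_push {ι κ : Type*} (α a : ι → ℝ≥0∞) (f : ι → κ → ℝ≥0∞) (ha : ∀ i, a i ≠ ∞)
    (hα : α ≤ a) (hf : ∀ i, ∑' j, f i j = a i) (i : ι) :
    ∑' j, α i * (f i j / a i) = α i := by
  simp only [div_eq_mul_inv, ENNReal.tsum_mul_left, ENNReal.tsum_mul_right, hf]
  rcases eq_or_ne (a i) 0 with h | h
  · have := hα i
    rw [h] at this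
    simp [nonpos_iff_eq_zero.1 this]
  · rw [ENNReal.mul_inv_cancel h (ha i), mul_one]

/-- Schröder–Bernstein for flows: a flow `f` exhausting the left masses and a flow `g` exhausting
the right masses combine into one with both marginals prescribed. The part `α` of the left mass
is sent along `f`, and the rest of the right mass is served along `g`; the left marginal is
correct exactly when `α` is a fixed point of the monotone map `Φ`, which exists by
Knaster–Tarski. -/
lemma exists_flow {ι κ : Type*} (a : ι → ℝ≥0∞) (b : κ → ℝ≥0∞) (ha : ∀ i, a i ≠ ∞)
    (hb : ∀ j, b j ≠ ∞) (f g : ι → κ → ℝ≥0∞)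
    (hfr : ∀ i, ∑' j, f i j = a i) (hfc : ∀ j, ∑' i, f i j ≤ b j)
    (hgr : ∀ i, ∑' j, g i j ≤ a i) (hgc : ∀ j, ∑' i, g i j = b j) :
    ∃ m : ι → κ → ℝ≥0∞, (∀ i j, f i j = 0 → g i j = 0 → m i j = 0) ∧
      (∀ i, ∑' j, m i j = a i) ∧ ∀ j, ∑' i, m i j = b j := by
  -- `P` and `Q` push masses forward along the normalised flows `f` and `g`.
  let P : (ι → ℝ≥0∞) → κ → ℝ≥0∞ := fun α j => ∑' i, α i * (f i j / a i)
  let Q : (κ → ℝ≥0∞) → ι → ℝ≥0∞ := fun β i => ∑' j, β j * (g i j / b j)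
  have hP : Monotone P := fun α α' h j => ENNReal.tsum_le_tsum fun i => by gcongr; exact h i
  have hQ : Monotone Q := fun β β' h i => ENNReal.tsum_le_tsum fun j => by gcongr; exact h j
  -- Truncated subtraction keeps `Φ` monotone on all of `ι → ℝ≥0∞`.
  let Φ : (ι → ℝ≥0∞) →o (ι → ℝ≥0∞) :=
    ⟨fun α => a - Q (b - P α), fun α α' h =>
      tsub_le_tsub_left (hQ (tsub_le_tsub_left (hP h) _)) _⟩
  set α := Φ.lfp with hαdef
  have hfix : a - Q (b - P α) = α := Φ.map_lfp
  have hαa : α ≤ a := by rw [← hfix]; exact tsub_le_self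
  have hPα : P α ≤ b := by
    intro j
    refine le_trans (ENNReal.tsum_le_tsum fun i => ?_) (hfc j)
    calc α i * (f i j / a i) ≤ a i * (f i j / a i) := by gcongr; exact hαa i
      _ ≤ f i j := ENNReal.mul_div_le
  set β := b - P α with hβdef
  have hβb : β ≤ b := tsub_le_self
  have hQβ : Q β ≤ a := by
    intro i
    refine le_trans (ENNReal.tsum_le_tsum fun j => ?_) (hgr i)
    calc β j * (g i j / b j) ≤ b j * (g i j / b j) := by gcongr; exact hβb j
      _ ≤ g i j := ENNReal.mul_div_le
  refine ⟨fun i j => α i * (f i j / a i) + β j * (g i j / b j), ?_, ?_, ?_⟩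
  · intro i j h h'
    simp [h, h']
  · intro i
    rw [ENNReal.tsum_add, tsum_push α a f ha hαa hfr]
    change α i + Q β i = a i
    rw [← congrFun hfix i]
    exact tsub_add_cancel_of_le (hQβ i)
  · intro j
    rw [ENNReal.tsum_add, tsum_push β b (fun j i => g i j) hb hβb hgc]
    change P α j + (b j - P α j) = b j
    exact add_tsub_cancel_of_le (hPα j)

/-! ### A locally finite partition into small cells -/

/-- The map `q` labels the half-open cubes of a grid of mesh `ε / √(d + 1)`: its fibres are small,
and a bounded set meets only finitely many of them. -/
lemma exists_cells (d : ℕ) {ε : ℝ} (hε : 0 < ε) :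
    ∃ q : Euc d → (Fin d → ℤ), Measurable q ∧ (∀ x y, q x = q y → dist x y ≤ ε) ∧
      ∀ B : Set (Euc d), IsBounded B → (q '' B).Finite := by
  -- `d + 1` instead of `d` keeps the mesh positive when `d = 0`.
  set δ : ℝ := ε / √(d + 1) with hδdef
  have hδ : 0 < δ := by positivity
  refine ⟨fun x i => ⌊x i / δ⌋, ?_, ?_, ?_⟩
  · refine measurable_pi_iff.2 fun i => Int.measurable_floor.comp ?_
    fun_prop
  · intro x y h
    rw [EuclideanSpace.dist_eq]
    refine Real.sqrt_le_iff.2 ⟨hε.le, ?_⟩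
    have hi : ∀ i, dist (x i) (y i) ^ 2 ≤ δ ^ 2 := by
      intro i
      have h1 := Int.abs_sub_lt_one_of_floor_eq_floor (congrFun h i)
      rw [← sub_div, abs_div, abs_of_pos hδ, div_lt_one hδ] at h1
      rw [Real.dist_eq]
      gcongr
    calc ∑ i, dist (x i) (y i) ^ 2 ≤ ∑ _i : Fin d, δ ^ 2 := Finset.sum_le_sum fun i _ => hi i
      _ = d * δ ^ 2 := by simp
      _ ≤ (d + 1) * δ ^ 2 := by gcongr; linarith
      _ = ε ^ 2 := by
        rw [hδdef, div_pow, Real.sq_sqrt (by positivity)]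
        field_simp
  · intro B hB
    obtain ⟨R, hR⟩ := hB.exists_norm_le
    refine (Set.Finite.pi' fun _ : Fin d => Set.finite_Icc ⌊-R / δ⌋ ⌊R / δ⌋).subset ?_
    rintro _ ⟨x, hx, rfl⟩ i
    have h1 : |x i| ≤ R := (PiLp.norm_apply_le x i).trans (hR x hx)
    rw [abs_le] at h1
    exact ⟨Int.floor_mono (by gcongr; exact h1.1), Int.floor_mono (by gcongr; exact h1.2)⟩

/-! ### The easy inequality -/

/-- A transportation is concentrated on its support, so mass in `B` stays within any distance
exceeding the supremum of `|x - y|` over the support. -/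
lemma Di_le_Tra {d : ℕ} (ν₁ ν₂ : Measure (Euc d)) : Di ν₁ ν₂ ≤ Tra ν₁ ν₂ := by
  refine le_iInf fun ⟨γ, hγ⟩ => le_of_forall_gt fun c hc => ?_
  obtain ⟨r, hr1, hr2⟩ := ENNReal.lt_iff_exists_nnreal_btwn.1 hc
  refine lt_of_le_of_lt (sInf_le ⟨r, ⟨?_, ?_⟩, ENNReal.ofReal_coe_nnreal⟩) hr2
  · exact_mod_cast lt_of_le_of_lt zero_le hr1
  have h1 := hγ.2.1
  have h2 := hγ.2.2
  have hnull : γ (msupport γ)ᶜ = 0 := by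
    refine measure_null_of_locally_null _ fun x hx => ?_
    simp only [msupport, mem_compl_iff, mem_ofPred_eq, not_forall, not_not] at hx
    obtain ⟨U, hU, h0⟩ := hx
    exact ⟨U, mem_nhdsWithin_of_mem_nhds hU, h0⟩
  have hdist : ∀ p ∈ msupport γ, edist p.1 p.2 ≤ ENNReal.ofReal r := by
    intro p hp
    rw [ENNReal.ofReal_coe_nnreal]
    exact (le_iSup₂ (f := fun (p : Euc d × Euc d) (_ : p ∈ msupport γ) => edist p.1 p.2) p hp).trans
      hr1.le
  intro B _ hB
  have hBm : MeasurableSet (cthickening (r : ℝ) B) := isClosed_cthickening.measurableSet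
  constructor
  · rw [← h1, ← h2, Measure.map_apply measurable_fst hB, Measure.map_apply measurable_snd hBm]
    refine measure_mono_ae ?_
    filter_upwards [compl_mem_ae_iff.2 hnull] with p hp hpB
    rw [compl_compl] at hp
    refine (infEDist_le_edist_of_mem hpB).trans ?_
    rw [edist_comm]
    exact hdist p hp
  · rw [← h1, ← h2, Measure.map_apply measurable_snd hB, Measure.map_apply measurable_fst hBm]
    refine measure_mono_ae ?_
    filter_upwards [compl_mem_ae_iff.2 hnull] with p hp hpB
    rw [compl_compl] at hp
    exact (infEDist_le_edist_of_mem hpB).trans (hdist p hp)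

/-! ### From a flow between cells to a transportation -/

/-- The measure spreading the mass `m i j` proportionally to the product of `μ` restricted to the
cell `q ⁻¹' {i}` and `ν` restricted to the cell `q ⁻¹' {j}`. When a cell is null, `m i j` is `0`
in all uses, and so is the weight `m i j / 0`. -/
def glue {X ι : Type*} [MeasurableSpace X] (μ ν : Measure X) (q : X → ι)
    (m : ι → ι → ℝ≥0∞) : Measure (X × X) :=
  Measure.sum fun p : ι × ι => (m p.1 p.2 / (μ (q ⁻¹' {p.1}) * ν (q ⁻¹' {p.2}))) •
    (μ.restrict (q ⁻¹' {p.1})).prod (ν.restrict (q ⁻¹' {p.2}))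

lemma tsum_measure_inter_cell {X ι : Type*} [MeasurableSpace X] [Countable ι] [MeasurableSpace ι]
    [MeasurableSingletonClass ι] (μ : Measure X) {q : X → ι} (hq : Measurable q) {B : Set X}
    (hB : MeasurableSet B) : ∑' i, μ (B ∩ q ⁻¹' {i}) = μ B := by
  rw [← measure_iUnion]
  · congr 1
    ext x
    simp
  · intro i j hij
    refine Set.disjoint_left.2 ?_
    rintro x ⟨-, hx⟩ ⟨-, hy⟩
    exact hij (hx.symm.trans hy)
  · exact fun i => hB.inter (hq (measurableSet_singleton i))

lemma cell_weight {m A a b : ℝ≥0∞} (ha : a ≠ ∞) (hb : b ≠ ∞) (hma : m ≤ a) (hmb : m ≤ b) :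
    m / (a * b) * (A * b) = A / a * m := by
  rcases eq_or_ne b 0 with rfl | hb0
  · simp [nonpos_iff_eq_zero.1 hmb]
  rcases eq_or_ne a 0 with rfl | ha0
  · simp [nonpos_iff_eq_zero.1 hma]
  rw [div_eq_mul_inv, ENNReal.mul_inv (Or.inl ha0) (Or.inl ha), div_eq_mul_inv]
  calc m * (a⁻¹ * b⁻¹) * (A * b) = A * a⁻¹ * m * (b⁻¹ * b) := by ring
    _ = _ := by rw [ENNReal.inv_mul_cancel hb0 hb, mul_one]

section
variable {X ι : Type*} [MeasurableSpace X] {μ ν : Measure X}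
    {q : X → ι} {m : ι → ι → ℝ≥0∞}

lemma glue_fst [Countable ι] [MeasurableSpace ι] [MeasurableSingletonClass ι] [SFinite ν]
    (hq : Measurable q)
    (hμ : ∀ i, μ (q ⁻¹' {i}) ≠ ∞) (hν : ∀ i, ν (q ⁻¹' {i}) ≠ ∞)
    (hr : ∀ i, ∑' j, m i j = μ (q ⁻¹' {i})) (hc : ∀ j, ∑' i, m i j = ν (q ⁻¹' {j})) :
    (glue μ ν q m).map Prod.fst = μ := by
  ext B hB
  rw [Measure.map_apply measurable_fst hB, glue, Measure.sum_apply _ (measurable_fst hB),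
    ENNReal.tsum_prod']
  rw [← tsum_measure_inter_cell μ hq hB]
  refine tsum_congr fun i => ?_
  have hterm : ∀ j, ((m i j / (μ (q ⁻¹' {i}) * ν (q ⁻¹' {j}))) •
      (μ.restrict (q ⁻¹' {i})).prod (ν.restrict (q ⁻¹' {j}))) (Prod.fst ⁻¹' B)
      = μ (B ∩ q ⁻¹' {i}) / μ (q ⁻¹' {i}) * m i j := by
    intro j
    rw [Measure.smul_apply, smul_eq_mul, ← Set.prod_univ, Measure.prod_prod,
      Measure.restrict_apply hB, Measure.restrict_apply_univ]
    exact cell_weight (hμ i) (hν j) (hr i ▸ ENNReal.le_tsum j)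
      (hc j ▸ ENNReal.le_tsum (f := fun i => m i j) i)
  simp only [hterm, ENNReal.tsum_mul_left, hr]
  exact ENNReal.div_mul_cancel' (fun h => measure_mono_null inter_subset_right h)
    (fun h => absurd h (hμ i))

lemma glue_swap [SFinite μ] [SFinite ν] : (glue μ ν q m).map Prod.swap = glue ν μ q fun i j => m j i := by
  rw [glue, Measure.map_sum measurable_swap.aemeasurable, glue,
    ← Measure.sum_comp_equiv (Equiv.prodComm ι ι)]
  congr 1
  funext p
  simp only [Function.comp_apply, Equiv.prodComm_apply, Prod.fst_swap, Prod.snd_swap,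
    Measure.map_smul, Measure.prod_swap, mul_comm]

lemma glue_snd [Countable ι] [MeasurableSpace ι] [MeasurableSingletonClass ι] [SFinite μ]
    [SFinite ν] (hq : Measurable q)
    (hμ : ∀ i, μ (q ⁻¹' {i}) ≠ ∞) (hν : ∀ i, ν (q ⁻¹' {i}) ≠ ∞)
    (hr : ∀ i, ∑' j, m i j = μ (q ⁻¹' {i})) (hc : ∀ j, ∑' i, m i j = ν (q ⁻¹' {j})) :
    (glue μ ν q m).map Prod.snd = ν := by
  have h := glue_fst hq hν hμ hc hr (m := fun i j => m j i)
  rwa [← glue_swap, Measure.map_map measurable_fst measurable_swap] at h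

lemma glue_null [SFinite μ] [SFinite ν] {U : Set (X × X)} (hU : MeasurableSet U)
    (h : ∀ p ∈ U, m (q p.1) (q p.2) = 0) : glue μ ν q m U = 0 := by
  rw [glue, Measure.sum_apply _ hU, ENNReal.tsum_eq_zero]
  rintro ⟨i, j⟩
  by_cases hm : m i j = 0
  · simp [hm]
  · rw [Measure.smul_apply, smul_eq_mul, Measure.prod_restrict, Measure.restrict_apply hU]
    have : U ∩ (q ⁻¹' {i}) ×ˢ (q ⁻¹' {j}) = ∅ := by
      refine Set.eq_empty_of_forall_notMem ?_
      rintro p ⟨hp, h1, h2⟩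
      refine hm ?_
      rw [← h p hp, show q p.1 = i from h1, show q p.2 = j from h2]
    simp [this]

end

/-! ### The hard inequality -/

/-- Applied to finite unions of cells, the inequality `μ B ≤ ν (B_{+r})` is the Hall condition for
the graph joining two cells that contain points at distance less than `r + ε`. -/
lemma exists_cell_flow {X ι : Type*} [PseudoMetricSpace X] [MeasurableSpace X]
    [Countable ι] [MeasurableSpace ι] [MeasurableSingletonClass ι] [DecidableEq ι]
    {μ ν : Measure X} {q : X → ι} (hq : Measurable q)
    (hcb : ∀ i, IsBounded (q ⁻¹' {i}))
    (hμ : ∀ i, μ (q ⁻¹' {i}) ≠ ∞) (hν : ∀ i, ν (q ⁻¹' {i}) ≠ ∞) {r ε : ℝ}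
    (hr : 0 < r) (hε : 0 < ε)
    (hfin : ∀ i, (q '' thickening (r + ε) (q ⁻¹' {i})).Finite)
    (h : ∀ B : Set X, IsBounded B → MeasurableSet B → μ B ≤ ν (cthickening r B)) :
    ∃ f : ι → ι → ℝ≥0∞, (∀ i j, f i j ≠ 0 → ∃ x y, q x = i ∧ q y = j ∧ dist x y < r + ε) ∧
      (∀ i, ∑' j, f i j = μ (q ⁻¹' {i})) ∧ ∀ j, ∑' i, f i j ≤ ν (q ⁻¹' {j}) := by
  have hcell : ∀ i, MeasurableSet (q ⁻¹' {i}) := fun i => hq (measurableSet_singleton i)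
  obtain ⟨f, h0, h1, h2⟩ := exists_half_flow (fun i => (μ (q ⁻¹' {i})).toReal)
    (fun j => (ν (q ⁻¹' {j})).toReal) (fun _ => ENNReal.toReal_nonneg)
    (fun _ => ENNReal.toReal_nonneg) (fun i => (hfin i).toFinset) (fun I => by
      rw [← ENNReal.toReal_sum fun i _ => hμ i, ← ENNReal.toReal_sum fun i _ => hν i]
      refine ENNReal.toReal_mono (ENNReal.sum_ne_top.2 fun i _ => hν i) ?_
      rw [sum_measure_preimage_singleton _ fun i _ => hcell i,
        sum_measure_preimage_singleton _ fun i _ => hcell i]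
      refine (h _ ?_ (hq I.measurableSet)).trans (measure_mono ?_)
      · rw [← Finset.set_biUnion_preimage_singleton]
        exact (isBounded_biUnion I.finite_toSet).2 fun i _ => hcb i
      · intro y hy
        obtain ⟨x, hx, hxy⟩ := mem_thickening_iff.1
          (cthickening_subset_thickening' (by positivity) (lt_add_of_pos_right r hε) _ hy)
        simp only [Set.mem_preimage, Finset.mem_coe, Finset.mem_biUnion, Finite.mem_toFinset]
        exact ⟨q x, hx, y, mem_thickening_iff.2 ⟨x, rfl, hxy⟩, rfl⟩)
  refine ⟨f, fun i j hij => ?_, fun i => ?_, fun j => ?_⟩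
  · by_contra hcon
    refine hij (h0 i j fun hj => hcon ?_)
    simp only [Finite.mem_toFinset] at hj
    obtain ⟨y, hy, rfl⟩ := hj
    obtain ⟨x, hx, hxy⟩ := mem_thickening_iff.1 hy
    exact ⟨x, y, hx, rfl, by rwa [dist_comm]⟩
  · rw [h1, ENNReal.ofReal_toReal (hμ i)]
  · exact (h2 j).trans_eq (ENNReal.ofReal_toReal (hν j))

/-- The error `3 * ε` consists of one `ε` for replacing the closed by an open neighbourhood and one
for the diameter of the cell of each endpoint. -/
lemma exists_transport {d : ℕ} (ν₁ ν₂ : Measure (Euc d)) [IsLocallyFiniteMeasure ν₁]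
    [IsLocallyFiniteMeasure ν₂] {r ε : ℝ} (hr : 0 < r) (hε : 0 < ε)
    (h : ∀ B : Set (Euc d), IsBounded B → MeasurableSet B →
      ν₁ B ≤ ν₂ (cthickening r B) ∧ ν₂ B ≤ ν₁ (cthickening r B)) :
    ∃ γ, IsTransport ν₁ ν₂ γ ∧ ∀ p ∈ msupport γ, edist p.1 p.2 ≤ ENNReal.ofReal (r + 3 * ε) := by
  obtain ⟨q, hq, hqd, hqf⟩ := exists_cells d hε
  have hcb : ∀ i, IsBounded (q ⁻¹' {i}) := fun i =>
    isBounded_iff.2 ⟨ε, fun x hx y hy => hqd x y (hx.trans hy.symm)⟩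
  have h1 : ∀ i, ν₁ (q ⁻¹' {i}) ≠ ∞ := fun i => (hcb i).measure_lt_top.ne
  have h2 : ∀ i, ν₂ (q ⁻¹' {i}) ≠ ∞ := fun i => (hcb i).measure_lt_top.ne
  have hfin : ∀ i, (q '' thickening (r + ε) (q ⁻¹' {i})).Finite := fun i =>
    hqf _ (hcb i).thickening
  obtain ⟨f, hf, hfr, hfc⟩ := exists_cell_flow hq hcb h1 h2 hr hε hfin
    fun B hb hm => (h B hb hm).1
  obtain ⟨g, hg, hgr, hgc⟩ := exists_cell_flow hq hcb h2 h1 hr hε hfin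
    fun B hb hm => (h B hb hm).2
  obtain ⟨m, hm, hmr, hmc⟩ := exists_flow _ _ h1 h2 f (fun i j => g j i) hfr hfc hgc hgr
  have hfst := glue_fst hq h1 h2 hmr hmc
  refine ⟨glue ν₁ ν₂ q m, ⟨⟨fun p => ?_⟩, hfst, glue_snd hq h1 h2 hmr hmc⟩, fun p hp => ?_⟩
  · refine ⟨Prod.fst ⁻¹' ball p.1 1, continuous_fst.continuousAt (ball_mem_nhds _ one_pos), ?_⟩
    rw [← Measure.map_apply measurable_fst measurableSet_ball, hfst]
    exact measure_ball_lt_top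
  · by_contra hcon
    have hU : IsOpen {p : Euc d × Euc d | ENNReal.ofReal (r + 3 * ε) < edist p.1 p.2} :=
      isOpen_lt continuous_const (continuous_fst.edist continuous_snd)
    refine hp _ (hU.mem_nhds (not_le.1 hcon)) (glue_null hU.measurableSet ?_)
    rintro ⟨x, y⟩ hxy
    by_contra hne
    have hd : ∃ x' y', q x' = q x ∧ q y' = q y ∧ dist x' y' < r + ε := by
      by_cases hfz : f (q x) (q y) = 0
      · obtain ⟨y', x', hy, hx, hlt⟩ := hg _ _ fun hgz => hne (hm _ _ hfz hgz)
        exact ⟨x', y', hx, hy, by rwa [dist_comm]⟩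
      · exact hf _ _ hfz
    obtain ⟨x', y', hx, hy, hlt⟩ := hd
    have e1 := hqd _ _ hx
    have e2 := hqd _ _ hy
    have e3 := dist_triangle4 x x' y' y
    rw [dist_comm x x'] at e3
    simp only [mem_ofPred_eq, edist_dist] at hxy
    exact absurd hxy (not_lt.2 (ENNReal.ofReal_le_ofReal (by linarith)))

lemma Tra_eq_Di {d : ℕ} (ν₁ ν₂ : Measure (Euc d)) [IsLocallyFiniteMeasure ν₁]
    [IsLocallyFiniteMeasure ν₂] : Tra ν₁ ν₂ = Di ν₁ ν₂ := by
  refine le_antisymm (le_sInf ?_) (Di_le_Tra ν₁ ν₂)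
  rintro _ ⟨r, ⟨hr, h⟩, rfl⟩
  refine ENNReal.le_of_forall_pos_le_add fun ε hε _ => ?_
  obtain ⟨γ, hγ, hs⟩ := exists_transport ν₁ ν₂ hr (ε := ε / 3) (by positivity) h
  refine (iInf_le _ (⟨γ, hγ⟩ : {γ // IsTransport ν₁ ν₂ γ})).trans (iSup₂_le fun p hp => ?_)
  refine (hs p hp).trans_eq ?_
  rw [mul_div_cancel₀ _ (by norm_num : (3 : ℝ) ≠ 0), ENNReal.ofReal_add hr.le ε.coe_nonneg,
    ENNReal.ofReal_coe_nnreal]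

/-- For any two locally finite nonnegative Borel measures `ν₁`, `ν₂` on
`ℝ^d`, `Tra(ν₁, ν₂) = Di(ν₁, ν₂)`; in particular `Tra(ν) = D(ν)` for every locally finite
nonnegative Borel measure `ν`. -/
theorem stmt_0 (d : ℕ) (hd : 1 ≤ d) (ν₁ ν₂ ν : Measure (Euc d))
    [IsLocallyFiniteMeasure ν₁] [IsLocallyFiniteMeasure ν₂] [IsLocallyFiniteMeasure ν] :
    Tra ν₁ ν₂ = Di ν₁ ν₂ ∧ Tra ν volume = Di ν volume :=
  ⟨Tra_eq_Di ν₁ ν₂, Tra_eq_Di ν volume⟩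
end
end

section
/- There is a constant C > 0 depending only on the dimension d with the following property: for every locally finite nonnegative Borel measure ν on ℝ^d and every real r > Tra(ν), there exists a locally integrable vector field v : ℝ^d → ℝ^d connecting ν and m_d such that R̃a(v) ≤ C·r. Consequently, const·inf_v R̃a(v) ≤ Tra(ν), the infimum being over all vector fields v connecting ν and m_d. -/
/-!
Every pair `(x, y)` of a transportation `γ` with `|x - y| ≤ r` is replaced by a flow that spreads
a unit mass from `x`, along straight segments and in unit time, to the uniform distribution on the
ball of radius `r` about `y`. The time integral of the momentum density is an integrable vector
field, with `div` equal to `δ_x` minus that uniform distribution (`integral_integral_kern`: the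
fundamental theorem of calculus on each segment). Spreading the target is what makes the field a
function instead of a vector-valued measure. The superposition `v` of these fields over `γ` has
divergence `ν - m_d * χ_r`, because the second marginal of `γ` is `m_d`, and `m_d * χ_r = m_d`; so
`v` connects `ν` and `m_d` (`connects_field`).

Each mass travels at most `2r` and stays within distance `r` of `y` (`lintegral_kern_le`). Hence
only the `y` in the concentric ball of radius `2r` contribute to the integral of `|v|` over a ball
of radius `r`, which gives `|v| * χ_r ≤ 2r · 2^d` and the constant `C = 1 + 2^(d+1)`.
-/


open MeasureTheory Metric Set Bornology
open scoped ENNReal RealInnerProductSpace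

noncomputable section

/-! ### The averaging kernel -/

section Chi

variable {d : ℕ} {r : ℝ}

lemma chi_nonneg (x : Euc d) : 0 ≤ chi d r x := by
  unfold chi
  exact mul_nonneg (by positivity) (indicator_nonneg (fun _ _ => zero_le_one) _)

lemma chi_eq_zero {x : Euc d} (h : r < ‖x‖) : chi d r x = 0 := by
  unfold chi
  rw [indicator_of_notMem (by simpa using h), mul_zero]

lemma chi_neg (x : Euc d) : chi d r (-x) = chi d r x := by
  simp [chi, indicator]

@[fun_prop]
lemma measurable_chi : Measurable (chi d r) :=
  (measurable_one.indicator measurableSet_closedBall).const_mul _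

lemma integrable_chi : Integrable (chi d r) := by
  unfold chi
  refine Integrable.const_mul ?_ _
  exact (integrable_indicator_iff measurableSet_closedBall).2
    (integrableOn_const measure_closedBall_lt_top.ne)

lemma integral_chi (hr : 0 < r) : ∫ x, chi d r x = 1 := by
  unfold chi
  rw [integral_const_mul, integral_indicator measurableSet_closedBall]
  have h : (volume (closedBall (0 : Euc d) r)).toReal ≠ 0 :=
    (ENNReal.toReal_pos (measure_closedBall_pos _ _ hr).ne' measure_closedBall_lt_top.ne).ne'
  simp [Measure.real, inv_mul_cancel₀ h]

lemma lintegral_chi (hr : 0 < r) (y : Euc d) :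
    ∫⁻ m, ENNReal.ofReal (chi d r (m - y)) = 1 := by
  rw [lintegral_sub_right_eq_self (fun m => ENNReal.ofReal (chi d r m)) y,
    ← ofReal_integral_eq_lintegral_ofReal integrable_chi (ae_of_all _ chi_nonneg),
    integral_chi hr, ENNReal.ofReal_one]

end Chi

/-! ### Dilations about a point -/

section Dilation

variable {d : ℕ}

lemma lintegral_dilation (x : Euc d) {t : ℝ} (ht : 0 < t) {f : Euc d → ℝ≥0∞}
    (hf : Measurable f) :
    ∫⁻ z, f (t⁻¹ • (z - x) + x) = ENNReal.ofReal (t ^ d) * ∫⁻ m, f m := by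
  rw [lintegral_sub_right_eq_self (fun z => f (t⁻¹ • z + x)) x]
  have h := lintegral_map (μ := (volume : Measure (Euc d))) (f := fun z => f (z + x))
    (g := fun z => t⁻¹ • z) (by fun_prop) (by fun_prop)
  rw [← h, Measure.map_addHaar_smul _ (inv_ne_zero ht.ne'), lintegral_smul_measure,
    lintegral_add_right_eq_self f x]
  simp [abs_of_pos ht]

lemma integral_dilation (x : Euc d) {t : ℝ} (ht : 0 < t) (f : Euc d → ℝ) :
    ∫ z, f (t⁻¹ • (z - x) + x) = t ^ d * ∫ m, f m := by
  rw [integral_sub_right_eq_self (fun z => f (t⁻¹ • z + x)) x,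
    Measure.integral_comp_smul volume (fun z => f (z + x)),
    integral_add_right_eq_self f x]
  simp [abs_of_pos ht]

lemma dilation_inv (x m : Euc d) {t : ℝ} (ht : 0 < t) :
    x + t • (t⁻¹ • (m - x) + x - x) = m := by
  rw [add_sub_cancel_right, smul_inv_smul₀ ht.ne']
  abel

end Dilation

/-! ### The flow field of a single pair -/

section Kern

variable {d : ℕ} {r : ℝ}

/-- At the parameter `p = ((x, y), t)`, the momentum density at time `t` of a unit mass which
starts at `x` and spreads along straight segments, at constant speed on each of them, to the
uniform distribution on the closed ball of radius `r` centered at `y`. The segment that goes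
through `z` at time `t` ends at `m = x + (z - x) / t`. -/
def kern (r : ℝ) (p : (Euc d × Euc d) × ℝ) (z : Euc d) : Euc d :=
  (p.2 ^ d)⁻¹ • (chi d r (p.2⁻¹ • (z - p.1.1) + p.1.1 - p.1.2) •
    (p.2⁻¹ • (z - p.1.1) + p.1.1 - p.1.1))

@[fun_prop]
lemma measurable_kern : Measurable (fun q : Euc d × ((Euc d × Euc d) × ℝ) => kern r q.2 q.1) := by
  unfold kern
  fun_prop

/-- Substituting the endpoint `m` for the position `z = x + t (m - x)`. -/
lemma lintegral_kern (x y : Euc d) {t : ℝ} (ht : 0 < t) {g : Euc d → ℝ≥0∞} (hg : Measurable g) :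
    ∫⁻ z, ‖kern r ((x, y), t) z‖ₑ * g z =
      ∫⁻ m, ‖chi d r (m - y) • (m - x)‖ₑ * g (x + t • (m - x)) := by
  have h := lintegral_dilation x ht
    (f := fun m => ‖(t ^ d)⁻¹ • (chi d r (m - y) • (m - x))‖ₑ * g (x + t • (m - x)))
    (by fun_prop)
  simp only [dilation_inv x _ ht] at h
  simp only [kern]
  rw [h, ← lintegral_const_mul _ (by fun_prop)]
  congr 1 with m
  have htd : 0 < t ^ d := by positivity
  rw [enorm_smul, ← mul_assoc, ← mul_assoc, Real.enorm_of_nonneg (by positivity),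
    ← ENNReal.ofReal_mul htd.le, mul_inv_cancel₀ htd.ne', ENNReal.ofReal_one, one_mul]

lemma integral_kern (x y : Euc d) {t : ℝ} (ht : 0 < t) (L : Euc d → Euc d →L[ℝ] ℝ) :
    ∫ z, L z (kern r ((x, y), t) z) =
      ∫ m, chi d r (m - y) * L (x + t • (m - x)) (m - x) := by
  have h := integral_dilation x ht
    (f := fun m => L (x + t • (m - x)) ((t ^ d)⁻¹ • (chi d r (m - y) • (m - x))))
  simp only [dilation_inv x _ ht] at h
  simp only [kern]
  rw [h, ← integral_const_mul]
  congr 1 with m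
  have htd : t ^ d ≠ 0 := by positivity
  simp only [map_smul, smul_eq_mul]
  field_simp

/-- A mass of the pair `(x, y)` moves by at most `2r`, and never leaves the closed ball of
radius `r` centered at `y`. -/
lemma lintegral_kern_le (hr : 0 < r) {x y : Euc d} (hxy : ‖x - y‖ ≤ r) {t : ℝ}
    (ht : t ∈ Ioc (0 : ℝ) 1) (c : Euc d) (a : ℝ) :
    ∫⁻ z in closedBall c a, ‖kern r ((x, y), t) z‖ₑ ≤
      (closedBall c (a + r)).indicator (fun _ => ENNReal.ofReal (2 * r)) y := by
  have e : ∫⁻ z in closedBall c a, ‖kern r ((x, y), t) z‖ₑ =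
      ∫⁻ z, ‖kern r ((x, y), t) z‖ₑ * (closedBall c a).indicator 1 z := by
    rw [← lintegral_indicator measurableSet_closedBall]
    congr 1 with z
    by_cases hz : z ∈ closedBall c a <;> simp [hz]
  rw [e, lintegral_kern x y ht.1 (measurable_one.indicator measurableSet_closedBall)]
  calc _ ≤ ∫⁻ m, ENNReal.ofReal (chi d r (m - y)) *
        (closedBall c (a + r)).indicator (fun _ => ENNReal.ofReal (2 * r)) y := by
        refine lintegral_mono fun m => ?_
        by_cases hm : r < ‖m - y‖
        · simp [chi_eq_zero hm]
        push Not at hm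
        rw [enorm_smul, Real.enorm_of_nonneg (chi_nonneg _), mul_assoc]
        gcongr
        by_cases hz : x + t • (m - x) ∈ closedBall c a
        · have hz' : x + t • (m - x) ∈ closedBall y r :=
            (convex_closedBall y r).add_smul_sub_mem (by simpa [dist_eq_norm] using hxy)
              (by simpa [dist_eq_norm] using hm) ⟨ht.1.le, ht.2⟩
          have hy : y ∈ closedBall c (a + r) := by
            rw [mem_closedBall] at hz hz' ⊢
            rw [dist_comm] at hz'
            linarith [dist_triangle y (x + t • (m - x)) c]
          rw [indicator_of_mem hz, indicator_of_mem hy, Pi.one_apply, mul_one,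
            ← ofReal_norm]
          refine ENNReal.ofReal_le_ofReal ?_
          have : m - x = (m - y) - (x - y) := by abel
          rw [this]
          linarith [norm_sub_le (m - y) (x - y)]
        · simp [hz]
    _ = _ := by
        rw [lintegral_mul_const _ (by fun_prop), lintegral_chi hr, one_mul]

/-- Averaged over its lifetime, the flow of the pair `(x, y)` carries `δ_x` to the uniform
distribution on the ball of radius `r` about `y`. -/
lemma integral_integral_kern (hr : 0 < r) {φ : Euc d → ℝ} (hφ : ContDiff ℝ (⊤ : ℕ∞) φ)
    (hc : HasCompactSupport φ) (x y : Euc d) :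
    ∫ t in Ioc (0 : ℝ) 1, ∫ z, fderiv ℝ φ z (kern r ((x, y), t) z) =
      (∫ m, chi d r (m - y) * φ m) - φ x := by
  have hD : Continuous (fderiv ℝ φ) := hφ.continuous_fderiv (by simp)
  obtain ⟨M, hM⟩ := (hc.fderiv (𝕜 := ℝ)).exists_bound_of_continuous hD
  have hchi : Integrable (fun m : Euc d => chi d r (m - y)) := integrable_chi.comp_sub_right y
  rw [setIntegral_congr_fun measurableSet_Ioc
    (fun t ht => integral_kern x y ht.1 (fderiv ℝ φ))]
  rw [integral_integral_swap]
  · have h1 : ∀ m, ∫ t in Ioc (0 : ℝ) 1,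
        chi d r (m - y) * fderiv ℝ φ (x + t • (m - x)) (m - x) =
        chi d r (m - y) * φ m - chi d r (m - y) * φ x := by
      intro m
      rw [integral_const_mul, ← intervalIntegral.integral_of_le zero_le_one,
        intervalIntegral.integral_eq_sub_of_hasDerivAt
          (f := fun t : ℝ => φ (x + t • (m - x)))]
      · simp [mul_sub]
      · intro t _
        have h2 : HasDerivAt (fun t : ℝ => x + t • (m - x)) (m - x) t := by
          simpa using ((hasDerivAt_id t).smul_const (m - x)).const_add x
        exact ((hφ.differentiable (by simp)) _).hasFDerivAt.comp_hasDerivAt t h2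
      · refine Continuous.intervalIntegrable ?_ _ _
        fun_prop
    simp_rw [h1]
    rw [integral_sub, integral_mul_const, integral_sub_right_eq_self (chi d r) y,
      integral_chi hr, one_mul]
    · obtain ⟨M', hM'⟩ := hc.exists_bound_of_continuous hφ.continuous
      exact hchi.mul_bdd hφ.continuous.aestronglyMeasurable (ae_of_all _ hM')
    · exact hchi.mul_const _
  · refine Integrable.mono' (g := fun q : ℝ × Euc d =>
      chi d r (q.2 - y) * (M * (r + ‖x - y‖))) ?_ ?_ ?_
    · exact (hchi.mul_const _).comp_snd _
    · refine Measurable.aestronglyMeasurable ?_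
      simp only [Function.uncurry_def]
      refine Measurable.mul (by fun_prop) ?_
      exact Continuous.measurable (by fun_prop)
    · refine ae_of_all _ fun q => ?_
      simp only [Function.uncurry_def]
      rw [norm_mul, Real.norm_of_nonneg (chi_nonneg _)]
      by_cases hm : r < ‖q.2 - y‖
      · simp [chi_eq_zero hm]
      push Not at hm
      refine mul_le_mul_of_nonneg_left ?_ (chi_nonneg _)
      refine (ContinuousLinearMap.le_opNorm _ _).trans ?_
      refine mul_le_mul (hM _) ?_ (norm_nonneg _) ((norm_nonneg _).trans (hM 0))
      have : q.2 - x = (q.2 - y) - (x - y) := by abel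
      rw [this]
      linarith [norm_sub_le (q.2 - y) (x - y)]

end Kern

/-! ### The superposition over a transportation -/

section Field

variable {d : ℕ} {r : ℝ}

/-- The superposition of the flow fields of all pairs `(x, y)`, weighted by `γ`. -/
def field (r : ℝ) (γ : Measure (Euc d × Euc d)) (z : Euc d) : Euc d :=
  ∫ p, kern r p z ∂(γ.prod (volume.restrict (Ioc (0 : ℝ) 1)))

variable {γ : Measure (Euc d × Euc d)} [SFinite γ]

lemma lintegral_lintegral_kern_le (hr : 0 < r) (hγ : γ.map Prod.snd = volume)
    (hs : ∀ᵐ p ∂γ, ‖p.1 - p.2‖ ≤ r) (c : Euc d) (a : ℝ) :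
    ∫⁻ z in closedBall c a, ∫⁻ p, ‖kern r p z‖ₑ ∂(γ.prod (volume.restrict (Ioc (0 : ℝ) 1))) ≤
      ENNReal.ofReal (2 * r) * volume (closedBall c (a + r)) := by
  have hm : Measurable (fun q : Euc d × ((Euc d × Euc d) × ℝ) => ‖kern r q.2 q.1‖ₑ) := by
    fun_prop
  rw [lintegral_lintegral_swap hm.aemeasurable,
    lintegral_prod _ (Measurable.aemeasurable hm.lintegral_prod_left')]
  calc _ ≤ ∫⁻ p, (closedBall c (a + r)).indicator (fun _ => ENNReal.ofReal (2 * r)) p.2 ∂γ := by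
        refine lintegral_mono_ae (hs.mono fun p hp => ?_)
        calc _ ≤ ∫⁻ _ in Ioc (0 : ℝ) 1,
              (closedBall c (a + r)).indicator (fun _ => ENNReal.ofReal (2 * r)) p.2 :=
              setLIntegral_mono measurable_const
                fun t ht => lintegral_kern_le hr (x := p.1) (y := p.2) hp ht c a
          _ = _ := by simp
    _ = _ := by
        have h := lintegral_map (μ := γ) (g := Prod.snd)
          (f := (closedBall c (a + r)).indicator (fun _ => ENNReal.ofReal (2 * r)))
          (measurable_const.indicator measurableSet_closedBall) measurable_snd
        rw [← h, hγ, lintegral_indicator measurableSet_closedBall, setLIntegral_const]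

lemma integrable_kern (hr : 0 < r) (hγ : γ.map Prod.snd = volume)
    (hs : ∀ᵐ p ∂γ, ‖p.1 - p.2‖ ≤ r) (c : Euc d) (a : ℝ) :
    Integrable (fun q : Euc d × ((Euc d × Euc d) × ℝ) => kern r q.2 q.1)
      ((volume.restrict (closedBall c a)).prod (γ.prod (volume.restrict (Ioc (0 : ℝ) 1)))) := by
  refine ⟨measurable_kern.aestronglyMeasurable, ?_⟩
  rw [HasFiniteIntegral, lintegral_prod _ measurable_kern.enorm.aemeasurable]
  exact (lintegral_lintegral_kern_le hr hγ hs c a).trans_lt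
    (ENNReal.mul_lt_top ENNReal.ofReal_lt_top measure_closedBall_lt_top)

lemma locallyIntegrable_field (hr : 0 < r) (hγ : γ.map Prod.snd = volume)
    (hs : ∀ᵐ p ∂γ, ‖p.1 - p.2‖ ≤ r) : LocallyIntegrable (field r γ) volume := fun x =>
  ⟨closedBall x 1, closedBall_mem_nhds x one_pos,
    (integrable_kern hr hγ hs x 1).integral_prod_left⟩

lemma raTilde_field_le (hr : 0 < r) (hγ : γ.map Prod.snd = volume)
    (hs : ∀ᵐ p ∂γ, ‖p.1 - p.2‖ ≤ r) :
    RaTilde (field r γ) ≤ ENNReal.ofReal ((1 + 2 ^ (d + 1)) * r) := by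
  refine (iInf₂_le r hr).trans ?_
  rw [add_mul, one_mul, ENNReal.ofReal_add hr.le (by positivity)]
  gcongr
  refine essSup_le_of_ae_le _ (ae_of_all _ fun x => ?_)
  have hV0 : volume (closedBall (0 : Euc d) r) ≠ 0 := (measure_closedBall_pos _ _ hr).ne'
  have hV : volume (closedBall (0 : Euc d) r) ≠ ∞ := measure_closedBall_lt_top.ne
  have e : ∀ y, ENNReal.ofReal (chi d r (x - y)) * (‖field r γ y‖₊ : ℝ≥0∞) =
      (volume (closedBall (0 : Euc d) r))⁻¹ *
        (closedBall x r).indicator (fun y => ‖field r γ y‖ₑ) y := by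
    intro y
    have hmem : x - y ∈ closedBall (0 : Euc d) r ↔ y ∈ closedBall x r := by
      rw [mem_closedBall, mem_closedBall, dist_zero_right, dist_comm, dist_eq_norm]
    unfold chi
    by_cases hy : y ∈ closedBall x r
    · rw [indicator_of_mem hy, indicator_of_mem (hmem.2 hy), Pi.one_apply, mul_one,
        ENNReal.ofReal_inv_of_pos (ENNReal.toReal_pos hV0 hV), ENNReal.ofReal_toReal hV]
      rfl
    · rw [indicator_of_notMem hy, indicator_of_notMem (fun h => hy (hmem.1 h))]
      simp
  simp_rw [e]
  rw [lintegral_const_mul' _ _ (ENNReal.inv_ne_top.2 hV0),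
    lintegral_indicator measurableSet_closedBall]
  calc _ ≤ (volume (closedBall (0 : Euc d) r))⁻¹ *
        (ENNReal.ofReal (2 * r) * volume (closedBall x (r + r))) := by
        gcongr
        exact (lintegral_mono fun z => enorm_integral_le_lintegral_enorm _).trans
          (lintegral_lintegral_kern_le hr hγ hs x r)
    _ = (volume (closedBall (0 : Euc d) r))⁻¹ *
        (ENNReal.ofReal (2 * r) * (ENNReal.ofReal (2 ^ d) *
          volume (closedBall (0 : Euc d) r))) := by
        rw [← two_mul, Measure.addHaar_closedBall_mul volume x zero_le_two hr.le]
        simp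
    _ = (ENNReal.ofReal (2 * r) * ENNReal.ofReal (2 ^ d)) *
        ((volume (closedBall (0 : Euc d) r))⁻¹ * volume (closedBall (0 : Euc d) r)) := by ring
    _ = ENNReal.ofReal (2 ^ (d + 1) * r) := by
        rw [ENNReal.inv_mul_cancel hV0 hV, mul_one, ← ENNReal.ofReal_mul (by positivity)]
        congr 1
        ring

lemma connects_field (hr : 0 < r) {ν : Measure (Euc d)} [IsLocallyFiniteMeasure ν]
    (hν : γ.map Prod.fst = ν) (hγ : γ.map Prod.snd = volume)
    (hs : ∀ᵐ p ∂γ, ‖p.1 - p.2‖ ≤ r) : Connects (field r γ) ν := by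
  intro φ hφ hc
  set μ := γ.prod (volume.restrict (Ioc (0 : ℝ) 1)) with hμ
  have hD : Continuous (fderiv ℝ φ) := hφ.continuous_fderiv (by simp)
  have hDc : HasCompactSupport (fderiv ℝ φ) := hc.fderiv (𝕜 := ℝ)
  obtain ⟨M, hM⟩ := hDc.exists_bound_of_continuous hD
  obtain ⟨a, ha⟩ := hDc.isCompact.isBounded.subset_closedBall (0 : Euc d)
  have hz0 : ∀ z ∉ closedBall (0 : Euc d) a, fderiv ℝ φ z = 0 := fun z hz =>
    image_eq_zero_of_notMem_tsupport fun h => hz (ha h)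
  have hK := integrable_kern hr hγ hs (0 : Euc d) a
  -- The pairing with `∇φ` is integrable in all variables, since `∇φ` is bounded and vanishes
  -- off the ball of radius `a`.
  have hF : Integrable (Function.uncurry fun (z : Euc d) p => fderiv ℝ φ z (kern r p z))
      ((volume : Measure (Euc d)).prod μ) := by
    have hmeas : Measurable (Function.uncurry
        fun (z : Euc d) (p : (Euc d × Euc d) × ℝ) => fderiv ℝ φ z (kern r p z)) := by
      have h1 : Measurable fun q : Euc d × ((Euc d × Euc d) × ℝ) =>
          (fderiv ℝ φ q.1, kern r q.2 q.1) :=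
        (hD.measurable.comp measurable_fst).prodMk measurable_kern
      exact (isBoundedBilinearMap_apply (𝕜 := ℝ) (E := Euc d) (F := ℝ)).continuous.measurable.comp
        h1
    have hr1 : (volume.restrict (closedBall (0 : Euc d) a)).prod μ =
        ((volume : Measure (Euc d)).prod μ).restrict (closedBall (0 : Euc d) a ×ˢ univ) := by
      rw [← Measure.prod_restrict, Measure.restrict_univ]
    have hon : IntegrableOn (Function.uncurry fun (z : Euc d) p => fderiv ℝ φ z (kern r p z))
        (closedBall (0 : Euc d) a ×ˢ univ) ((volume : Measure (Euc d)).prod μ) := by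
      rw [IntegrableOn, ← hr1]
      refine (hK.norm.const_mul M).mono' hmeas.aestronglyMeasurable (ae_of_all _ fun q => ?_)
      exact (ContinuousLinearMap.le_opNorm _ _).trans (by gcongr; exact hM _)
    refine (integrableOn_iff_integrable_of_support_subset ?_).1 hon
    intro q hq
    refine ⟨?_, mem_univ _⟩
    by_contra h
    exact hq (by simp [Function.uncurry_def, hz0 _ h])
  have hpt : ∀ᵐ z : Euc d, ⟪field r γ z, gradient φ z⟫ = ∫ p, fderiv ℝ φ z (kern r p z) ∂μ := by
    have h1 := (ae_restrict_iff' measurableSet_closedBall).1 hK.prod_right_ae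
    filter_upwards [h1] with z hz
    have h2 : ⟪field r γ z, gradient φ z⟫ = fderiv ℝ φ z (field r γ z) := by
      rw [real_inner_comm, ← toDual_gradient]
      rfl
    rw [h2]
    by_cases hza : z ∈ closedBall (0 : Euc d) a
    · exact ((fderiv ℝ φ z).integral_comp_comm (hz hza)).symm
    · simp [hz0 z hza]
  rw [integral_congr_ae hpt, integral_integral_swap hF, hμ]
  have hFp : Integrable (fun p => ∫ z, fderiv ℝ φ z (kern r p z))
      (γ.prod (volume.restrict (Ioc (0 : ℝ) 1))) := hF.integral_prod_right
  rw [integral_prod _ hFp]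
  simp_rw [integral_integral_kern hr hφ hc]
  have hφi : Integrable φ := hφ.continuous.integrable_of_hasCompactSupport hc
  have hφν : Integrable φ ν := hφ.continuous.integrable_of_hasCompactSupport hc
  -- `m ↦ y - m` and the evenness of `chi` turn the averaged value into a convolution.
  have hconv : ∀ y : Euc d, ∫ m, chi d r (m - y) * φ m =
      convolution (chi d r) φ (ContinuousLinearMap.mul ℝ ℝ) volume y := by
    intro y
    rw [convolution_def, ← integral_sub_left_eq_self (fun m => chi d r (m - y) * φ m) volume y]
    congr 1 with m
    simp [chi_neg]
  simp_rw [hconv]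
  have hci : Integrable (convolution (chi d r) φ (ContinuousLinearMap.mul ℝ ℝ) volume) :=
    integrable_chi.integrable_convolution _ hφi
  subst hν
  have hci' : Integrable (convolution (chi d r) φ (ContinuousLinearMap.mul ℝ ℝ) volume)
    (γ.map Prod.snd) := by rwa [hγ]
  have h1 : Integrable (fun p : Euc d × Euc d =>
      convolution (chi d r) φ (ContinuousLinearMap.mul ℝ ℝ) volume p.2) γ :=
    hci'.comp_measurable measurable_snd
  have h2 : Integrable (fun p : Euc d × Euc d => φ p.1) γ := hφν.comp_measurable measurable_fst
  rw [integral_sub h1 h2,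
    ← integral_map measurable_snd.aemeasurable hci'.aestronglyMeasurable,
    ← integral_map measurable_fst.aemeasurable hφν.aestronglyMeasurable, hγ,
    integral_convolution _ integrable_chi hφi, integral_chi hr]
  simp

end Field

lemma ae_mem_msupport {X : Type*} [TopologicalSpace X] [SecondCountableTopology X]
    [MeasurableSpace X] (μ : Measure X) : ∀ᵐ x ∂μ, x ∈ msupport μ := by
  refine measure_null_of_locally_null _ fun x hx => ?_
  simp only [msupport, mem_compl_iff, mem_ofPred_eq, not_forall, not_not] at hx
  obtain ⟨U, hU, h0⟩ := hx
  exact ⟨U, mem_nhdsWithin_of_mem_nhds hU, h0⟩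

lemma exists_field {d : ℕ} {ν : Measure (Euc d)} [IsLocallyFiniteMeasure ν] {r : ℝ}
    (h : Tra ν volume < ENNReal.ofReal r) :
    ∃ v : Euc d → Euc d, LocallyIntegrable v volume ∧ Connects v ν ∧
      RaTilde v ≤ ENNReal.ofReal ((1 + 2 ^ (d + 1)) * r) := by
  have hr : 0 < r := ENNReal.ofReal_pos.1 (bot_le.trans_lt h)
  obtain ⟨⟨γ, hlf, h1, h2⟩, hγ⟩ := iInf_lt_iff.1 h
  have hs : ∀ᵐ p ∂γ, ‖p.1 - p.2‖ ≤ r := by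
    filter_upwards [ae_mem_msupport γ] with p hp
    have h3 : edist p.1 p.2 ≤ ENNReal.ofReal r :=
      (le_iSup₂ (f := fun p (_ : p ∈ msupport γ) => edist p.1 p.2) p hp).trans hγ.le
    rwa [edist_dist, ENNReal.ofReal_le_ofReal_iff hr.le, dist_eq_norm] at h3
  exact ⟨field r γ, locallyIntegrable_field hr h2 hs, connects_field hr h1 h2 hs,
    raTilde_field_le hr h2 hs⟩

/-- There is a constant `C > 0` depending only on `d` such that for every
locally finite nonnegative Borel measure `ν` on `ℝ^d` and every real `r > Tra(ν)` there is a
locally integrable vector field `v` connecting `ν` and `m_d` with `R̃a(v) ≤ C·r`.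
Consequently `C⁻¹ · inf_v R̃a(v) ≤ Tra(ν)`. -/
theorem stmt_1 (d : ℕ) (hd : 1 ≤ d) :
    ∃ C : ℝ, 0 < C ∧
      ∀ ν : Measure (Euc d), IsLocallyFiniteMeasure ν →
        (∀ r : ℝ, Tra ν volume < ENNReal.ofReal r →
          ∃ v : Euc d → Euc d, LocallyIntegrable v volume ∧ Connects v ν ∧
            RaTilde v ≤ ENNReal.ofReal (C * r)) ∧
        ENNReal.ofReal C⁻¹ *
            (⨅ v : {v : Euc d → Euc d // LocallyIntegrable v volume ∧ Connects v ν},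
              RaTilde v.1) ≤
          Tra ν volume := by
  obtain ⟨C, hC, hex⟩ : ∃ C : ℝ, 0 < C ∧ ∀ ν : Measure (Euc d), IsLocallyFiniteMeasure ν →
      ∀ r : ℝ, Tra ν volume < ENNReal.ofReal r →
        ∃ v : Euc d → Euc d, LocallyIntegrable v volume ∧ Connects v ν ∧
          RaTilde v ≤ ENNReal.ofReal (C * r) :=
    ⟨1 + 2 ^ (d + 1), by positivity, fun ν hν r hr => exists_field hr⟩
  refine ⟨C, hC, fun ν hν => ⟨hex ν hν, ?_⟩⟩
  refine le_of_forall_gt_imp_ge_of_dense fun b hb => ?_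
  rcases eq_or_ne b ∞ with rfl | hb'
  · exact le_top
  rw [← ENNReal.ofReal_toReal hb'] at hb
  obtain ⟨v, hv1, hv2, hv3⟩ := hex ν hν _ hb
  calc _ ≤ ENNReal.ofReal C⁻¹ * ENNReal.ofReal (C * b.toReal) :=
        mul_le_mul_right ((iInf_le _ ⟨v, hv1, hv2⟩).trans hv3) _
    _ = b := by
        rw [← ENNReal.ofReal_mul (by positivity), inv_mul_cancel_left₀ hC.ne',
          ENNReal.ofReal_toReal hb']
end
end

section
/- There is a constant C > 0 depending only on the dimension d such that the following holds. Let u : ℝ^d → ℝ be a C² function with Δu(x) + 1 ≥ 0 for all x, and let ν be the locally finite nonnegative Borel measure on ℝ^d with density Δu + 1 with respect to m_d (so that Δu = ν − m_d). Then Tra(ν) ≤ C·√(sup_{ℝ^d} |u|). -/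
open MeasureTheory Metric Set Bornology
open scoped ENNReal RealInnerProductSpace

noncomputable section

/-! Fix a scale `r` and let `p_a`, `a ∈ ℤ^d`, be the lattice translates at spacing `r` of a smooth
bump, forming a partition of unity. Every `p_a` has the same Lebesgue mass `m₀`, of order `r ^ d`,
and `∫ |Δp_a|` is of order `r ^ (d - 2)`.

For a finite set `A` of indices, Green's identity gives
`∫ p_A dν - #A * m₀ = ∫ p_A Δu = ∫ u Δp_A`, where `p_A = ∑_{a ∈ A} p_a`. Since the `Δp_a` sum to
zero, `Δp_A` is carried by the bumps on the outer boundary `N(A) \ A`, where `N(A)` is the set of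
neighbours of `A`; the same is true of `Δp_{N(A)}` (`abs_sum_le_boundary`). Hence the discrepancies
of `A` and of `N(A)` are at most `sup |u| * r ^ (d - 2) * #(N(A) \ A)` up to a constant, and this is
at most `m₀ * #(N(A) \ A)` once `r ^ 2` exceeds a constant times `sup |u|`. These bounds say exactly
that `ν(A) ≤ m(N(A))` and `m(A) ≤ ν(N(A))`: Hall's condition in both directions.

A real-valued, infinite marriage theorem (`exists_flow`) turns this into a flow between the masses
of the pieces `p_a ν` and `p_b m` along neighbouring indices. It is obtained from Hall's theorem for
infinite families applied to masses rounded to multiples of `1 / n`; the two one-sided matchings are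
merged by a relational Schröder–Bernstein argument, and `n → ∞` is taken along an ultrafilter.
Spreading `p_a ν` over the pieces `p_b m` according to the flow (`Tra_le_of_flow`) moves mass by
`O(r)`, and `r` may be taken of order `√(sup |u|)`. -/

/-! ### A real-valued marriage theorem -/

/-- Hall's theorem for indices with multiplicities: every one of the `ℓ a` units at `a` is matched
to its own unit at some neighbour of `a`. -/
lemma hall_units {ι : Type*} [DecidableEq ι] (N : ι → Finset ι) (ℓ k : ι → ℕ)
    (h : ∀ A : Finset ι, ∑ a ∈ A, ℓ a ≤ ∑ b ∈ A.biUnion N, k b) :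
    ∃ F : (Σ a, Fin (ℓ a)) → Σ b, Fin (k b), Function.Injective F ∧
      ∀ x, (F x).1 ∈ N x.1 := by
  classical
  have key := (Finset.all_card_le_biUnion_card_iff_exists_injective
    (fun x : Σ a, Fin (ℓ a) => (N x.1).sigma fun b => (Finset.univ : Finset (Fin (k b))))).1 ?_
  · obtain ⟨F, hF, hN⟩ := key
    exact ⟨F, hF, fun x => (Finset.mem_sigma.1 (hN x)).1⟩
  · intro s
    have h1 : s ⊆ (s.image Sigma.fst).sigma fun a => (Finset.univ : Finset (Fin (ℓ a))) := by
      intro x hx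
      exact Finset.mem_sigma.2 ⟨Finset.mem_image_of_mem _ hx, Finset.mem_univ _⟩
    have h2 : (s.biUnion fun x : Σ a, Fin (ℓ a) =>
        (N x.1).sigma fun b => (Finset.univ : Finset (Fin (k b)))) =
        ((s.image Sigma.fst).biUnion N).sigma fun b => (Finset.univ : Finset (Fin (k b))) := by
      ext y
      simp only [Finset.mem_biUnion, Finset.mem_sigma, Finset.mem_univ, and_true,
        Finset.mem_image]
      constructor
      · rintro ⟨x, hx, hy⟩
        exact ⟨x.1, ⟨x, hx, rfl⟩, hy⟩
      · rintro ⟨_, ⟨x, hx, rfl⟩, hy⟩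
        exact ⟨x, hx, hy⟩
    rw [h2]
    refine (Finset.card_le_card h1).trans ?_
    simpa [Finset.card_sigma] using h (s.image Sigma.fst)

/-- A Mendelsohn–Dulmage theorem: a matching covering `α` and a matching covering `S ⊆ β` combine
into a matching covering both `α` and `S`. -/
lemma exists_matching_of_rel {α β : Type*} (E : α → β → Prop) (S : Set β)
    (F : α → β) (hF : Function.Injective F) (hFE : ∀ a, E a (F a))
    (G : S → α) (hG : Function.Injective G) (hGE : ∀ b : S, E (G b) b) :
    ∃ h : α → β, Function.Injective h ∧ (∀ a, E a (h a)) ∧ S ⊆ Set.range h := by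
  classical
  -- Both sides are padded with dummies `β × ℕ`; a point of `β` may be matched to a dummy on the
  -- left exactly when it lies outside `S`, and the dummies on the right absorb the unused ones.
  let R : α ⊕ (β × ℕ) → β ⊕ (β × ℕ) → Prop := fun p q => match p, q with
    | Sum.inl a, Sum.inl b => E a b
    | Sum.inl _, Sum.inr _ => False
    | Sum.inr _, Sum.inl b => b ∉ S
    | Sum.inr _, Sum.inr _ => True
  let f : α ⊕ (β × ℕ) → β ⊕ (β × ℕ) := Sum.map F id
  let g : β ⊕ (β × ℕ) → α ⊕ (β × ℕ) := fun q => match q with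
    | Sum.inl b => if hb : b ∈ S then Sum.inl (G ⟨b, hb⟩) else Sum.inr (b, 0)
    | Sum.inr x => Sum.inr (x.1, x.2 + 1)
  have hf : Function.Injective f := hF.sumMap Function.injective_id
  have hg : Function.Injective g := by
    rintro (b | x) (b' | x') hq
    · by_cases hb : b ∈ S <;> by_cases hb' : b' ∈ S <;> simp [g, hb, hb'] at hq
      · have := congrArg Subtype.val (hG hq)
        simpa using this
      · simpa using hq
    · by_cases hb : b ∈ S <;> simp [g, hb] at hq
    · by_cases hb' : b' ∈ S <;> simp [g, hb'] at hq
    · simp only [g, Sum.inr.injEq, Prod.mk.injEq, add_left_inj] at hq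
      rw [Prod.ext hq.1 hq.2]
  obtain ⟨h, hh, hR⟩ := Function.Embedding.schroeder_bernstein_of_rel hf hg R
    (by rintro (a | x)
        · exact hFE a
        · trivial)
    (by rintro (b | x)
        · by_cases hb : b ∈ S
          · simp only [g, hb, dite_true]; exact hGE ⟨b, hb⟩
          · simp only [g, hb, dite_false]; exact hb
        · trivial)
  have hl : ∀ a, ∃ b, h (Sum.inl a) = Sum.inl b ∧ E a b := by
    intro a
    have := hR (Sum.inl a)
    rcases hq : h (Sum.inl a) with b | x
    · rw [hq] at this; exact ⟨b, rfl, this⟩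
    · rw [hq] at this; exact this.elim
  choose k hk hkE using hl
  refine ⟨k, ?_, hkE, ?_⟩
  · intro a a' haa
    have : h (Sum.inl a) = h (Sum.inl a') := by rw [hk, hk, haa]
    exact Sum.inl_injective (hh.1 this)
  · intro b hb
    obtain ⟨p, hp⟩ := hh.2 (Sum.inl b)
    rcases p with a | x
    · exact ⟨a, Sum.inl_injective ((hk a).symm.trans hp)⟩
    · have := hR (Sum.inr x)
      rw [hp] at this
      exact (this hb).elim

/-- The marriage theorem at resolution `1 / n`: rows are correct up to rounding down `n * w a`, and
columns up to an error of at most `D` units, where `D` bounds the degree of the graph. -/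
lemma exists_approx_flow {ι : Type*} [DecidableEq ι] (N : ι → Finset ι)
    (hsymm : ∀ a b, b ∈ N a → a ∈ N b) (D : ℕ) (hD : ∀ a, (N a).card ≤ D)
    (w : ι → ℝ) (hw : ∀ a, 0 ≤ w a)
    (H1 : ∀ A : Finset ι, ∑ a ∈ A, w a ≤ ((A.biUnion N).card : ℝ))
    (H2 : ∀ A : Finset ι, (A.card : ℝ) ≤ ∑ a ∈ A.biUnion N, w a) (n : ℕ) :
    ∃ f : ι → ι → ℕ, (∀ a b, b ∉ N a → f a b = 0) ∧
      (∀ a, ∑ b ∈ N a, f a b = ⌊n * w a⌋₊) ∧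
      (∀ b, ∑ a ∈ N b, f a b ≤ n) ∧ (∀ b, n ≤ ∑ a ∈ N b, f a b + D) := by
  classical
  let ℓ : ι → ℕ := fun a => ⌊n * w a⌋₊
  have hℓ : ∀ a, (ℓ a : ℝ) ≤ n * w a := fun a =>
    Nat.floor_le (mul_nonneg (Nat.cast_nonneg _) (hw a))
  have hℓ' : ∀ a, n * w a ≤ (ℓ a : ℝ) + 1 := fun a => (Nat.lt_floor_add_one _).le
  obtain ⟨F, hF, hFN⟩ := hall_units N ℓ (fun _ => n) (by
    intro A
    have : ((∑ a ∈ A, ℓ a : ℕ) : ℝ) ≤ ((∑ b ∈ A.biUnion N, n : ℕ) : ℝ) := by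
      push_cast
      calc ∑ a ∈ A, (ℓ a : ℝ) ≤ ∑ a ∈ A, n * w a := Finset.sum_le_sum fun a _ => hℓ a
        _ = n * ∑ a ∈ A, w a := by rw [Finset.mul_sum]
        _ ≤ n * ((A.biUnion N).card : ℝ) := by gcongr; exact H1 A
        _ = _ := by simp [mul_comm]
    exact_mod_cast this)
  obtain ⟨G, hG, hGN⟩ := hall_units N (fun _ => n - D) ℓ (by
    intro A
    rw [Finset.sum_const, smul_eq_mul]
    have hc : (A.biUnion N).card ≤ A.card * D := Finset.card_biUnion_le_card_mul _ _ _ fun a _ => hD a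
    rcases le_total n D with h | h
    · simp [Nat.sub_eq_zero_of_le h]
    have : ((A.card * (n - D) : ℕ) : ℝ) ≤ ((∑ b ∈ A.biUnion N, ℓ b : ℕ) : ℝ) := by
      push_cast [Nat.cast_sub h]
      have h1 : (n : ℝ) * ∑ a ∈ A.biUnion N, w a ≤
          ∑ a ∈ A.biUnion N, (ℓ a : ℝ) + (A.biUnion N).card := by
        rw [Finset.mul_sum]
        refine (Finset.sum_le_sum fun a _ => hℓ' a).trans ?_
        rw [Finset.sum_add_distrib]; simp
      have h2 : (n : ℝ) * A.card ≤ n * ∑ a ∈ A.biUnion N, w a := by gcongr; exact H2 A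
      have h3 : ((A.biUnion N).card : ℝ) ≤ A.card * D := by exact_mod_cast hc
      nlinarith
    exact_mod_cast this)
  let S : Set (Σ _ : ι, Fin n) := {y | (y.2 : ℕ) < n - D}
  obtain ⟨h, hh, hE, hS⟩ := exists_matching_of_rel
    (fun (x : Σ a, Fin (ℓ a)) (y : Σ _ : ι, Fin n) => y.1 ∈ N x.1) S F hF hFN
    (fun y => G ⟨y.1.1, ⟨y.1.2, y.2⟩⟩)
    (by
      rintro ⟨⟨b, i⟩, hi⟩ ⟨⟨b', i'⟩, hi'⟩ hq
      have := hG hq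
      simp only [Sigma.mk.injEq] at this
      obtain ⟨rfl, h2⟩ := this
      have h3 : (i : ℕ) = i' := by simpa using h2
      have : i = i' := Fin.ext h3
      subst this; rfl)
    (fun y => hsymm _ _ (hGN _))
  let f : ι → ι → ℕ := fun a b => (Finset.univ.filter fun i : Fin (ℓ a) => (h ⟨a, i⟩).1 = b).card
  -- the units of the column `b` that are matched, indexed by the left end of their edge
  let T : ι → Finset (Σ a, Fin (ℓ a)) := fun b =>
    (N b).sigma fun a => Finset.univ.filter fun i : Fin (ℓ a) => (h ⟨a, i⟩).1 = b
  have hT : ∀ b, ∑ a ∈ N b, f a b = ((T b).image h).card := by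
    intro b
    rw [Finset.card_image_of_injective _ hh, Finset.card_sigma]
  have hTs : ∀ b, (T b).image h ⊆
      Finset.univ.image (fun i : Fin n => (⟨b, i⟩ : Σ _ : ι, Fin n)) := by
    intro b y hy
    obtain ⟨x, hx, rfl⟩ := Finset.mem_image.1 hy
    have hx2 := (Finset.mem_filter.1 (Finset.mem_sigma.1 hx).2).2
    refine Finset.mem_image.2 ⟨(h x).2, Finset.mem_univ _, ?_⟩
    exact Sigma.ext hx2.symm (by simp)
  refine ⟨f, ?_, ?_, ?_, ?_⟩
  · intro a b hb
    refine Finset.card_eq_zero.2 (Finset.filter_eq_empty_iff.2 ?_)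
    rintro i - rfl
    exact hb (hE ⟨a, i⟩)
  · intro a
    have := Finset.card_eq_sum_card_fiberwise (f := fun i : Fin (ℓ a) => (h ⟨a, i⟩).1)
      (s := Finset.univ) (t := N a) (fun i _ => hE ⟨a, i⟩)
    rw [Finset.card_univ, Fintype.card_fin] at this
    exact this.symm
  · intro b
    rw [hT]
    refine (Finset.card_le_card (hTs b)).trans (Finset.card_image_le.trans ?_)
    simp
  · intro b
    have h1 : Finset.univ.image (fun i : Fin (n - D) =>
        (⟨b, ⟨i, i.2.trans_le (Nat.sub_le _ _)⟩⟩ : Σ _ : ι, Fin n)) ⊆ (T b).image h := by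
      intro y hy
      obtain ⟨i, -, rfl⟩ := Finset.mem_image.1 hy
      obtain ⟨x, hx⟩ := hS (show (⟨b, ⟨i, i.2.trans_le (Nat.sub_le _ _)⟩⟩ : Σ _ : ι, Fin n) ∈ S
        from i.2)
      refine Finset.mem_image.2 ⟨x, ?_, hx⟩
      have hb : (h x).1 = b := by rw [hx]
      refine Finset.mem_sigma.2 ⟨hsymm _ _ (hb ▸ hE x), ?_⟩
      exact Finset.mem_filter.2 ⟨Finset.mem_univ _, hb⟩
    have h2 := Finset.card_le_card h1
    rw [Finset.card_image_of_injective, Finset.card_univ, Fintype.card_fin, ← hT] at h2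
    · omega
    · intro i j hij
      simpa [Fin.ext_iff] using hij

/-- The real-valued marriage theorem on a graph of bounded degree: under Hall's condition in both
directions, the masses `w` can be moved along edges to unit masses. It follows from the
approximate version by an ultrafilter limit. -/
lemma exists_flow_s3 {ι : Type*} [DecidableEq ι] (N : ι → Finset ι)
    (hsymm : ∀ a b, b ∈ N a → a ∈ N b) (D : ℕ) (hD : ∀ a, (N a).card ≤ D)
    (w : ι → ℝ) (hw : ∀ a, 0 ≤ w a)
    (H1 : ∀ A : Finset ι, ∑ a ∈ A, w a ≤ ((A.biUnion N).card : ℝ))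
    (H2 : ∀ A : Finset ι, (A.card : ℝ) ≤ ∑ a ∈ A.biUnion N, w a) :
    ∃ f : ι → ι → ℝ, (∀ a b, 0 ≤ f a b) ∧ (∀ a b, b ∉ N a → f a b = 0) ∧
      (∀ a, ∑ b ∈ N a, f a b = w a) ∧ (∀ b, ∑ a ∈ N b, f a b = 1) := by
  choose g hg0 hgr hgc hgc' using exists_approx_flow N hsymm D hD w hw H1 H2
  let U : Ultrafilter ℕ := Filter.hyperfilter ℕ
  have hU : (U : Filter ℕ) ≤ Filter.atTop := Nat.hyperfilter_le_atTop
  have hpos : ∀ᶠ n : ℕ in U, 0 < n := hU (Filter.eventually_gt_atTop 0)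
  have hlim : ∀ a b, ∃ y ∈ Set.Icc (0 : ℝ) 1,
      Filter.Tendsto (fun n : ℕ => (g n a b : ℝ) / n) U (nhds y) := by
    intro a b
    have hmem : ∀ n : ℕ, (g n a b : ℝ) / n ∈ Set.Icc (0 : ℝ) 1 := by
      intro n
      refine ⟨by positivity, div_le_one_of_le₀ ?_ (Nat.cast_nonneg _)⟩
      by_cases hb : b ∈ N a
      · exact_mod_cast (Finset.single_le_sum (f := fun a => g n a b) (fun _ _ => Nat.zero_le _)
          (hsymm _ _ hb)).trans (hgc n b)
      · rw [hg0 n a b hb]; simp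
    obtain ⟨y, hy, hle⟩ := isCompact_Icc.ultrafilter_le_nhds
      (U.map fun n : ℕ => (g n a b : ℝ) / n)
      (Filter.le_principal_iff.2 (Filter.Eventually.of_forall (f := (U : Filter ℕ)) hmem))
    exact ⟨y, hy, hle⟩
  choose f hf01 hf using hlim
  have hinv : Filter.Tendsto (fun n : ℕ => (1 : ℝ) / n) U (nhds 0) :=
    tendsto_one_div_atTop_nhds_zero_nat.mono_left hU
  refine ⟨f, fun a b => (hf01 a b).1, ?_, ?_, ?_⟩
  · intro a b hb
    refine tendsto_nhds_unique (hf a b) ?_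
    simp [hg0 _ a b hb]
  · intro a
    refine tendsto_nhds_unique (tendsto_finsetSum (N a) fun b _ => hf a b) ?_
    have hlow : Filter.Tendsto (fun n : ℕ => w a - 1 / n) U (nhds (w a)) := by
      simpa using tendsto_const_nhds.sub hinv
    refine tendsto_of_tendsto_of_tendsto_of_le_of_le' hlow tendsto_const_nhds ?_ ?_
    all_goals
      filter_upwards [hpos] with n hn
      have hn' : (0 : ℝ) < n := by exact_mod_cast hn
      rw [← Finset.sum_div, ← Nat.cast_sum, hgr n a]
    · rw [sub_le_iff_le_add, ← add_div, le_div_iff₀ hn', mul_comm (w a)]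
      exact (Nat.lt_floor_add_one _).le
    · rw [div_le_iff₀ hn', mul_comm (w a)]
      exact Nat.floor_le (mul_nonneg hn'.le (hw a))
  · intro b
    refine tendsto_nhds_unique (tendsto_finsetSum (N b) fun a _ => hf a b) ?_
    have hlow : Filter.Tendsto (fun n : ℕ => (1 : ℝ) - D * (1 / n)) U (nhds 1) := by
      simpa using tendsto_const_nhds.sub (hinv.const_mul (D : ℝ))
    refine tendsto_of_tendsto_of_tendsto_of_le_of_le' hlow tendsto_const_nhds ?_ ?_
    all_goals
      filter_upwards [hpos] with n hn
      have hn' : (0 : ℝ) < n := by exact_mod_cast hn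
      rw [← Finset.sum_div, ← Nat.cast_sum]
    · rw [le_div_iff₀ hn']
      have : (n : ℝ) ≤ ((∑ a ∈ N b, g n a b : ℕ) : ℝ) + D := by exact_mod_cast hgc' n b
      field_simp
      linarith
    · rw [div_le_one hn']
      exact_mod_cast hgc n b

/-! ### The transport plan of a flow -/

/-- Pieces `p a • μ` of a partition of unity recover `μ`. -/
lemma tsum_withDensity_apply {X ι : Type*} [MeasurableSpace X] [Countable ι] (μ : Measure X)
    (p : ι → X → ℝ≥0∞) (hp : ∀ a, Measurable (p a)) (hsum : ∀ x, ∑' a, p a x = 1)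
    {s : Set X} (hs : MeasurableSet s) :
    ∑' a, μ.withDensity (p a) s = μ s := by
  simp_rw [withDensity_apply _ hs]
  rw [← lintegral_tsum fun a => (hp a).aemeasurable]
  simp [hsum]

/-- If `ν` and Lebesgue measure are cut into pieces by the same partition of unity `p`, of masses
`w a * m₀` and `m₀`, then a flow `f` from the masses `w` to unit masses spreads each piece of `ν`
over the pieces of Lebesgue measure, moving mass no further than `ρ`. -/
lemma Tra_le_of_flow {d : ℕ} {ι : Type*} [Countable ι] (N : ι → Finset ι)
    (hsymm : ∀ a b, b ∈ N a → a ∈ N b)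
    (ν : Measure (Euc d)) [IsLocallyFiniteMeasure ν]
    (p : ι → Euc d → ℝ) (hp : ∀ a, Continuous (p a))
    (hsum : ∀ x, ∑' a, ENNReal.ofReal (p a x) = 1)
    (w : ι → ℝ) (m₀ : ℝ) (hm₀ : 0 < m₀) (hw : ∀ a, 0 ≤ w a)
    (hν : ∀ a, ∫⁻ x, ENNReal.ofReal (p a x) ∂ν = ENNReal.ofReal (w a * m₀))
    (hm : ∀ a, ∫⁻ x, ENNReal.ofReal (p a x) = ENNReal.ofReal m₀)
    (f : ι → ι → ℝ) (hf : ∀ a b, 0 ≤ f a b) (hfN : ∀ a b, b ∉ N a → f a b = 0)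
    (hrow : ∀ a, ∑ b ∈ N a, f a b = w a) (hcol : ∀ b, ∑ a ∈ N b, f a b = 1)
    (ρ : ℝ) (hρ : ∀ a b, b ∈ N a → ∀ x y, 0 < p a x → 0 < p b y → dist x y ≤ ρ) :
    Tra ν volume ≤ ENNReal.ofReal ρ := by
  classical
  have hpm : ∀ a, Measurable fun x => ENNReal.ofReal (p a x) :=
    fun a => (hp a).measurable.ennreal_ofReal
  let V : ι → Measure (Euc d) := fun a => ν.withDensity fun x => ENNReal.ofReal (p a x)
  let W : ι → Measure (Euc d) := fun a => volume.withDensity fun x => ENNReal.ofReal (p a x)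
  have hVu : ∀ a, V a Set.univ = ENNReal.ofReal (w a * m₀) := fun a => by
    simp only [V, withDensity_apply _ MeasurableSet.univ, Measure.restrict_univ, hν]
  have hWu : ∀ a, W a Set.univ = ENNReal.ofReal m₀ := fun a => by
    simp only [W, withDensity_apply _ MeasurableSet.univ, Measure.restrict_univ, hm]
  have : ∀ a, IsFiniteMeasure (V a) := fun a => ⟨by rw [hVu]; exact ENNReal.ofReal_lt_top⟩
  have : ∀ a, IsFiniteMeasure (W a) := fun a => ⟨by rw [hWu]; exact ENNReal.ofReal_lt_top⟩
  -- if `w a = 0`, the division by zero below yields the coefficient `0`, as it should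
  let c : ι → ι → ℝ≥0∞ := fun a b => ENNReal.ofReal (f a b / (w a * m₀))
  let γ : Measure (Euc d × Euc d) := Measure.sum fun q : ι × ι => c q.1 q.2 • (V q.1).prod (W q.2)
  have hf_zero : ∀ a b, w a = 0 → f a b = 0 := by
    intro a b ha
    by_cases hb : b ∈ N a
    · exact (Finset.sum_eq_zero_iff_of_nonneg fun b _ => hf a b).1 ((hrow a).trans ha) b hb
    · exact hfN a b hb
  have hfst : γ.map Prod.fst = ν := by
    ext s hs
    rw [Measure.map_apply measurable_fst hs, Measure.sum_apply _ (measurable_fst hs),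
      ENNReal.tsum_prod']
    rw [← tsum_withDensity_apply ν _ hpm hsum hs]
    refine tsum_congr fun a => ?_
    have h1 : ∀ b, (c a b • (V a).prod (W b)) (Prod.fst ⁻¹' s) =
        ENNReal.ofReal (f a b / w a) * V a s := by
      intro b
      rw [Measure.smul_apply, smul_eq_mul, ← Set.prod_univ, Measure.prod_prod, hWu, mul_comm (V a s),
        ← mul_assoc, ← ENNReal.ofReal_mul (div_nonneg (hf a b) (mul_nonneg (hw a) hm₀.le))]
      congr 2
      rw [← div_div, div_mul_cancel₀ _ hm₀.ne']
    simp only [h1]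
    rw [ENNReal.tsum_mul_right]
    rcases eq_or_ne (w a) 0 with ha | ha
    · have h0 : V a s = 0 := measure_mono_null (Set.subset_univ s) (by rw [hVu, ha]; simp)
      change _ * V a s = V a s
      rw [h0, mul_zero]
    · rw [tsum_eq_sum (s := N a) fun b hb => by rw [hfN a b hb]; simp,
        ← ENNReal.ofReal_sum_of_nonneg fun b _ => div_nonneg (hf a b) (hw a), ← Finset.sum_div,
        hrow, div_self ha]
      simp [V]
  have hsnd : γ.map Prod.snd = volume := by
    ext s hs
    rw [Measure.map_apply measurable_snd hs, Measure.sum_apply _ (measurable_snd hs),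
      ENNReal.tsum_prod', ENNReal.tsum_comm]
    rw [← tsum_withDensity_apply volume _ hpm hsum hs]
    refine tsum_congr fun b => ?_
    have h1 : ∀ a, (c a b • (V a).prod (W b)) (Prod.snd ⁻¹' s) =
        ENNReal.ofReal (f a b) * W b s := by
      intro a
      rw [Measure.smul_apply, smul_eq_mul, ← Set.univ_prod, Measure.prod_prod, hVu,
        ← mul_assoc, ← ENNReal.ofReal_mul (div_nonneg (hf a b) (mul_nonneg (hw a) hm₀.le))]
      congr 2
      rcases eq_or_ne (w a) 0 with ha | ha
      · simp [hf_zero a b ha]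
      · rw [div_mul_cancel₀ _ (mul_ne_zero ha hm₀.ne')]
    simp only [h1]
    rw [ENNReal.tsum_mul_right, tsum_eq_sum (s := N b) fun a ha => by
      rw [hfN a b fun hb => ha (hsymm _ _ hb)]; simp,
      ← ENNReal.ofReal_sum_of_nonneg fun a _ => hf a b, hcol]
    simp [W]
  have hlf : IsLocallyFiniteMeasure γ := by
    refine ⟨fun q => ?_⟩
    obtain ⟨s, hs, hso, hfin⟩ := ν.exists_isOpen_measure_lt_top q.1
    refine ⟨Prod.fst ⁻¹' s, (hso.preimage continuous_fst).mem_nhds hs, ?_⟩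
    rwa [← Measure.map_apply measurable_fst hso.measurableSet, hfst]
  refine iInf_le_of_le ⟨γ, hlf, hfst, hsnd⟩ (iSup₂_le fun q hq => ?_)
  by_contra hlt
  have hlt' : ρ < dist q.1 q.2 := by
    rw [not_le, edist_dist] at hlt
    by_contra h
    exact absurd (ENNReal.ofReal_le_ofReal (not_lt.1 h)) (not_le.2 hlt)
  let B : Set (Euc d × Euc d) := {z | ρ < dist z.1 z.2}
  have hB : IsOpen B := isOpen_lt continuous_const (continuous_fst.dist continuous_snd)
  refine hq B (hB.mem_nhds hlt') ?_
  rw [Measure.sum_apply _ hB.measurableSet, ENNReal.tsum_eq_zero]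
  rintro ⟨a, b⟩
  by_cases hb : b ∈ N a
  · have hA : MeasurableSet {x | 0 < p a x} := (isOpen_lt continuous_const (hp a)).measurableSet
    have hA' : MeasurableSet {x | 0 < p b x} := (isOpen_lt continuous_const (hp b)).measurableSet
    have hVn : V a {x | 0 < p a x}ᶜ = 0 := by
      simp only [V]
      rw [withDensity_apply _ hA.compl]
      refine (setLIntegral_congr_fun hA.compl (g := fun _ => 0) fun x hx => ?_).trans (by simp)
      exact ENNReal.ofReal_of_nonpos (not_lt.1 hx)
    have hWn : W b {x | 0 < p b x}ᶜ = 0 := by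
      simp only [W]
      rw [withDensity_apply _ hA'.compl]
      refine (setLIntegral_congr_fun hA'.compl (g := fun _ => 0) fun x hx => ?_).trans (by simp)
      exact ENNReal.ofReal_of_nonpos (not_lt.1 hx)
    have hsub : B ⊆ ({x | 0 < p a x}ᶜ ×ˢ Set.univ) ∪ (Set.univ ×ˢ {x | 0 < p b x}ᶜ) := by
      rintro ⟨x, y⟩ hz
      by_contra hn
      simp only [Set.mem_union, Set.mem_prod, Set.mem_compl_iff, Set.mem_ofPred_eq, Set.mem_univ,
        and_true, true_and, not_or, not_not] at hn
      exact absurd (hρ a b hb x y hn.1 hn.2) (not_le.2 hz)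
    have h0 : (V a).prod (W b) B = 0 := by
      refine measure_mono_null hsub (measure_union_null ?_ ?_)
      · rw [Measure.prod_prod, hVn, zero_mul]
      · rw [Measure.prod_prod, hWn, mul_zero]
    simp [h0]
  · simp [c, hfN a b hb]

/-! ### The Laplacian -/

/-- The `i`-th coordinate vector. -/
abbrev basisVec {d : ℕ} (i : Fin d) : Euc d := EuclideanSpace.single i (1 : ℝ)

lemma contDiff_partial {d : ℕ} {u : Euc d → ℝ} (hu : ContDiff ℝ 2 u) (i : Fin d) :
    ContDiff ℝ 1 fun y => fderiv ℝ u y (basisVec i) :=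
  (hu.fderiv_right (m := 1) (by norm_num)).clm_apply contDiff_const

lemma continuous_partial_partial {d : ℕ} {u : Euc d → ℝ} (hu : ContDiff ℝ 2 u) (i : Fin d) :
    Continuous fun x => fderiv ℝ (fun y => fderiv ℝ u y (basisVec i)) x (basisVec i) :=
  ((contDiff_partial hu i).continuous_fderiv one_ne_zero).clm_apply continuous_const

lemma continuous_lap {d : ℕ} {u : Euc d → ℝ} (hu : ContDiff ℝ 2 u) : Continuous (lap u) :=
  continuous_finsetSum _ fun i _ => continuous_partial_partial hu i

lemma lap_congr {d : ℕ} {f g : Euc d → ℝ} {x : Euc d} (h : f =ᶠ[nhds x] g) :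
    lap f x = lap g x := by
  unfold lap
  refine Finset.sum_congr rfl fun i _ => ?_
  have h1 : (fun y => fderiv ℝ f y (basisVec i)) =ᶠ[nhds x] fun y => fderiv ℝ g y (basisVec i) := by
    filter_upwards [h.fderiv (𝕜 := ℝ)] with y hy
    rw [hy]
  rw [h1.fderiv_eq]

lemma lap_const {d : ℕ} (c : ℝ) (x : Euc d) : lap (fun _ => c) x = 0 := by
  simp [lap]

lemma lap_sum {d : ℕ} {ι : Type*} (S : Finset ι) (p : ι → Euc d → ℝ)
    (hp : ∀ a, ContDiff ℝ 2 (p a)) (x : Euc d) :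
    lap (fun y => ∑ a ∈ S, p a y) x = ∑ a ∈ S, lap (p a) x := by
  unfold lap
  rw [Finset.sum_comm]
  refine Finset.sum_congr rfl fun i _ => ?_
  have h1 : (fun y => fderiv ℝ (fun z => ∑ a ∈ S, p a z) y (basisVec i)) =
      fun y => ∑ a ∈ S, fderiv ℝ (p a) y (basisVec i) := by
    ext y
    rw [fderiv_fun_sum fun a _ => ((hp a).differentiable two_ne_zero) y]
    simp
  rw [h1, fderiv_fun_sum fun a _ => ((contDiff_partial (hp a) i).differentiable one_ne_zero) x]
  simp

lemma lap_comp_affine {d : ℕ} (f : Euc d → ℝ) (c : ℝ) (v x : Euc d) :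
    lap (fun y => f (c • y - v)) x = c ^ 2 * lap f (c • x - v) := by
  have key : ∀ (g : Euc d → ℝ) (y e : Euc d),
      fderiv ℝ (fun z => g (c • z - v)) y e = c * fderiv ℝ g (c • y - v) e := by
    intro g y e
    have := fderiv_comp_smul (𝕜 := ℝ) (f := fun z => g (z - v)) (x := y) c
    rw [this, fderiv_comp_sub]
    simp
  unfold lap
  rw [Finset.mul_sum]
  refine Finset.sum_congr rfl fun i _ => ?_
  simp_rw [key]
  have h2 : (fun y => c * fderiv ℝ f (c • y - v) (basisVec i)) =
      fun y => (fun z => c * fderiv ℝ f z (basisVec i)) (c • y - v) := rfl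
  have h3 : (fun z => c * fderiv ℝ f z (basisVec i)) =
      c • fun z => fderiv ℝ f z (basisVec i) := rfl
  rw [h2, key (fun z => c * fderiv ℝ f z (basisVec i)), h3, fderiv_const_smul_field]
  simp only [Pi.smul_apply, smul_apply, smul_eq_mul]
  ring

lemma hasCompactSupport_partial {d : ℕ} {p : Euc d → ℝ} (hc : HasCompactSupport p) (i : Fin d) :
    HasCompactSupport fun y => fderiv ℝ p y (basisVec i) :=
  hc.fderiv_apply ℝ _

lemma lap_eq_zero_of_notMem_tsupport {d : ℕ} {p : Euc d → ℝ} {x : Euc d} (hx : x ∉ tsupport p) :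
    lap p x = 0 := by
  rw [lap_congr (notMem_tsupport_iff_eventuallyEq.1 hx)]
  exact lap_const 0 x

lemma hasCompactSupport_lap {d : ℕ} {p : Euc d → ℝ} (hc : HasCompactSupport p) :
    HasCompactSupport (lap p) :=
  HasCompactSupport.intro hc fun _ hx => lap_eq_zero_of_notMem_tsupport hx

/-- Green's second identity against a compactly supported test function. -/
lemma integral_lap_mul {d : ℕ} {u p : Euc d → ℝ} (hu : ContDiff ℝ 2 u) (hp : ContDiff ℝ 2 p)
    (hc : HasCompactSupport p) : ∫ x, lap u x * p x = ∫ x, u x * lap p x := by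
  have hint1 : ∀ i : Fin d, Integrable fun x =>
      fderiv ℝ (fun y => fderiv ℝ u y (basisVec i)) x (basisVec i) * p x := fun i =>
    ((continuous_partial_partial hu i).mul hp.continuous).integrable_of_hasCompactSupport hc.mul_left
  have hint2 : ∀ i : Fin d, Integrable fun x =>
      u x * fderiv ℝ (fun y => fderiv ℝ p y (basisVec i)) x (basisVec i) := fun i =>
    (hu.continuous.mul (continuous_partial_partial hp i)).integrable_of_hasCompactSupport
      (hasCompactSupport_partial (hasCompactSupport_partial hc i) i).mul_left
  have hint3 : ∀ i : Fin d, Integrable fun x =>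
      fderiv ℝ u x (basisVec i) * fderiv ℝ p x (basisVec i) := fun i =>
    ((contDiff_partial hu i).continuous.mul (contDiff_partial hp i).continuous
      ).integrable_of_hasCompactSupport (hasCompactSupport_partial hc i).mul_left
  unfold lap
  simp_rw [Finset.sum_mul, Finset.mul_sum]
  rw [integral_finsetSum _ fun i _ => hint1 i, integral_finsetSum _ fun i _ => hint2 i]
  refine Finset.sum_congr rfl fun i _ => ?_
  rw [integral_mul_fderiv_eq_neg_fderiv_mul_of_integrable (hint3 i) (hint2 i)
    ((hu.continuous.mul (contDiff_partial hp i).continuous).integrable_of_hasCompactSupport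
      (hasCompactSupport_partial hc i).mul_left)
    (fun x _ => hu.differentiable two_ne_zero x)
    (fun x _ => (contDiff_partial hp i).differentiable one_ne_zero x)]
  rw [integral_mul_fderiv_eq_neg_fderiv_mul_of_integrable (hint1 i) (hint3 i)
    (((contDiff_partial hu i).continuous.mul hp.continuous).integrable_of_hasCompactSupport
      hc.mul_left)
    (fun x _ => (contDiff_partial hu i).differentiable one_ne_zero x)
    (fun x _ => hp.differentiable two_ne_zero x), neg_neg]

/-! ### A smooth partition of unity on a lattice of spacing `r` -/

/-- A smooth bump on `ℝ` supported in `[0, 2]` whose integer translates telescope to `1`. -/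
def hat (t : ℝ) : ℝ := Real.smoothTransition t - Real.smoothTransition (t - 1)

lemma hat_nonneg (t : ℝ) : 0 ≤ hat t :=
  sub_nonneg.2 (Real.smoothTransition.monotone (by linarith))

lemma hat_eq_zero_of_nonpos {t : ℝ} (h : t ≤ 0) : hat t = 0 := by
  rw [hat, Real.smoothTransition.zero_of_nonpos h,
    Real.smoothTransition.zero_of_nonpos (by linarith), sub_zero]

lemma hat_eq_zero_of_two_le {t : ℝ} (h : 2 ≤ t) : hat t = 0 := by
  rw [hat, Real.smoothTransition.one_of_one_le (by linarith),
    Real.smoothTransition.one_of_one_le (by linarith), sub_self]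

/-- The four integer translates of `hat` that can be nonzero near a given point. -/
lemma sum_hat {k : ℤ} {t : ℝ} (h1 : (k : ℝ) - 1 ≤ t) (h2 : t ≤ k + 2) :
    ∑ j ∈ Finset.Icc (k - 2) (k + 1), hat (t - j) = 1 := by
  have : Finset.Icc (k - 2) (k + 1) = {k - 2, k - 1, k, k + 1} := by
    ext j; simp only [Finset.mem_Icc, Finset.mem_insert, Finset.mem_singleton]; omega
  rw [this, Finset.sum_insert (by simp; omega), Finset.sum_insert (by simp; omega),
    Finset.sum_insert (by simp), Finset.sum_singleton]
  push_cast
  have e1 : Real.smoothTransition (t - (k - 2)) = 1 :=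
    Real.smoothTransition.one_of_one_le (by linarith)
  have e2 : Real.smoothTransition (t - (k + 1) - 1) = 0 :=
    Real.smoothTransition.zero_of_nonpos (by linarith)
  have e3 : t - (k - 2) - 1 = t - (k - 1) := by ring
  have e4 : t - (k - 1) - 1 = t - k := by ring
  have e5 : t - k - 1 = t - (k + 1) := by ring
  simp only [hat, e1, e2, e3, e4, e5]
  ring

/-- The tensor product bump on `ℝ^d`, supported in the cube `[0, 2]^d`. -/
def cell (d : ℕ) (x : Euc d) : ℝ := ∏ i, hat (x i)

/-- The bump attached to the lattice point `a`, at scale `r`. -/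
def cellAt {d : ℕ} (r : ℝ) (a : Fin d → ℤ) (x : Euc d) : ℝ :=
  cell d (r⁻¹ • x - latticePoint a)

lemma cellAt_eq_prod {d : ℕ} (r : ℝ) (a : Fin d → ℤ) (x : Euc d) :
    cellAt r a x = ∏ i, hat (r⁻¹ * x i - a i) := by
  simp [cellAt, cell, latticePoint]

lemma cellAt_nonneg {d : ℕ} (r : ℝ) (a : Fin d → ℤ) (x : Euc d) : 0 ≤ cellAt r a x := by
  rw [cellAt_eq_prod]
  exact Finset.prod_nonneg fun _ _ => hat_nonneg _

lemma contDiff_cell (d : ℕ) : ContDiff ℝ 2 (cell d) := by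
  have hs : ContDiff ℝ 2 Real.smoothTransition := Real.smoothTransition.contDiff (n := 2)
  have h : ContDiff ℝ 2 hat := hs.sub (hs.comp (contDiff_id.sub contDiff_const))
  refine contDiff_prod fun i _ => h.comp ?_
  exact (EuclideanSpace.proj (𝕜 := ℝ) i).contDiff

lemma contDiff_cellAt {d : ℕ} (r : ℝ) (a : Fin d → ℤ) : ContDiff ℝ 2 (cellAt r a) :=
  (contDiff_cell d).comp ((contDiff_id.const_smul _).sub contDiff_const)

lemma mem_of_cellAt_ne_zero {d : ℕ} {r : ℝ} {a : Fin d → ℤ} {x : Euc d} (h : cellAt r a x ≠ 0)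
    (i : Fin d) : 0 < r⁻¹ * x i - a i ∧ r⁻¹ * x i - a i < 2 := by
  rw [cellAt_eq_prod, Finset.prod_ne_zero_iff] at h
  have := h i (Finset.mem_univ i)
  exact ⟨not_le.1 fun h' => this (hat_eq_zero_of_nonpos h'),
    not_le.1 fun h' => this (hat_eq_zero_of_two_le h')⟩

lemma mem_of_mem_tsupport_cellAt {d : ℕ} {r : ℝ} {a : Fin d → ℤ} {x : Euc d}
    (h : x ∈ tsupport (cellAt r a)) (i : Fin d) :
    0 ≤ r⁻¹ * x i - a i ∧ r⁻¹ * x i - a i ≤ 2 := by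
  have hcl : IsClosed {x : Euc d | 0 ≤ r⁻¹ * x i - a i ∧ r⁻¹ * x i - a i ≤ 2} := by
    have hc : Continuous fun x : Euc d => r⁻¹ * x i - a i := by fun_prop
    exact (isClosed_le continuous_const hc).inter (isClosed_le hc continuous_const)
  have hsub : Function.support (cellAt r a) ⊆
      {x : Euc d | 0 ≤ r⁻¹ * x i - a i ∧ r⁻¹ * x i - a i ≤ 2} := fun y hy =>
    ⟨(mem_of_cellAt_ne_zero hy i).1.le, (mem_of_cellAt_ne_zero hy i).2.le⟩
  exact closure_minimal hsub hcl h

lemma dist_le_of_coord {d : ℕ} {x y : Euc d} {c : ℝ} (hc : 0 ≤ c) (h : ∀ i, |x i - y i| ≤ c) :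
    dist x y ≤ √d * c := by
  rw [EuclideanSpace.dist_eq, ← Real.sqrt_sq hc, ← Real.sqrt_mul (Nat.cast_nonneg d)]
  refine Real.sqrt_le_sqrt ?_
  calc ∑ i, dist (x i) (y i) ^ 2 ≤ ∑ _i : Fin d, c ^ 2 :=
        Finset.sum_le_sum fun i _ => by
          rw [Real.dist_eq]; exact pow_le_pow_left₀ (abs_nonneg _) (h i) 2
    _ = d * c ^ 2 := by simp

lemma hasCompactSupport_cellAt {d : ℕ} {r : ℝ} (hr : 0 < r) (a : Fin d → ℤ) :
    HasCompactSupport (cellAt r a) := by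
  refine HasCompactSupport.intro (isCompact_closedBall (r • latticePoint a) (√d * (2 * r))) ?_
  intro x hx
  by_contra h
  refine hx (mem_closedBall.2 (dist_le_of_coord (by positivity) fun i => ?_))
  obtain ⟨h1, h2⟩ := mem_of_cellAt_ne_zero h i
  have e : x i - (r • latticePoint a : Euc d) i = r * (r⁻¹ * x i - a i) := by
    simp [latticePoint]; field_simp
  rw [e, abs_of_pos (mul_pos hr h1)]
  nlinarith

lemma cellAt_one_zero (d : ℕ) : cellAt 1 (0 : Fin d → ℤ) = cell d := by
  ext x; rw [cellAt_eq_prod]; simp [cell]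

lemma hasCompactSupport_cell (d : ℕ) : HasCompactSupport (cell d) :=
  cellAt_one_zero d ▸ hasCompactSupport_cellAt one_pos 0

lemma integral_cell_pos (d : ℕ) : 0 < ∫ x, cell d x := by
  refine (contDiff_cell d).continuous.integral_pos_of_hasCompactSupport_nonneg_nonzero
    (hasCompactSupport_cell d) (fun x => Finset.prod_nonneg fun _ _ => hat_nonneg _)
    (x := latticePoint fun _ => 1) ?_
  simp [cell, latticePoint, hat]

/-- Near every point, a fixed finite part of the family already sums to `1`, the rest vanishing. -/
lemma cellAt_local {d : ℕ} (r : ℝ) (x : Euc d) : ∃ S : Finset (Fin d → ℤ), ∀ᶠ y in nhds x,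
    (∀ a ∉ S, cellAt r a y = 0) ∧ ∑ a ∈ S, cellAt r a y = 1 := by
  let k : Fin d → ℤ := fun i => ⌊r⁻¹ * x i⌋
  refine ⟨Fintype.piFinset fun i => Finset.Icc (k i - 2) (k i + 1), ?_⟩
  have hev : ∀ᶠ y : Euc d in nhds x, ∀ i, (k i : ℝ) - 1 < r⁻¹ * y i ∧ r⁻¹ * y i < k i + 2 := by
    refine Filter.eventually_all.2 fun i => ?_
    have hcont : Continuous fun y : Euc d => r⁻¹ * y i := by fun_prop
    have h1 := Int.floor_le (r⁻¹ * x i)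
    have h2 := Int.lt_floor_add_one (r⁻¹ * x i)
    exact (hcont.continuousAt.eventually_const_lt (by simp only [k]; linarith)).and
      (hcont.continuousAt.eventually_lt_const (by simp only [k]; linarith))
  filter_upwards [hev] with y hy
  constructor
  · intro a ha
    by_contra h
    refine ha (Fintype.mem_piFinset.2 fun i => Finset.mem_Icc.2 ?_)
    obtain ⟨h1, h2⟩ := mem_of_cellAt_ne_zero h i
    obtain ⟨h3, h4⟩ := hy i
    have h5 : ((k i - 3 : ℤ) : ℝ) < a i := by push_cast; linarith
    have h6 : (a i : ℝ) < ((k i + 2 : ℤ) : ℝ) := by push_cast; linarith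
    have h5' := Int.cast_lt.1 h5
    have h6' := Int.cast_lt.1 h6
    omega
  · simp_rw [cellAt_eq_prod]
    rw [← Finset.prod_univ_sum (fun i => Finset.Icc (k i - 2) (k i + 1))
      (fun i (j : ℤ) => hat (r⁻¹ * y i - j))]
    exact Finset.prod_eq_one fun i _ => sum_hat (hy i).1.le (hy i).2.le

lemma tsum_cellAt {d : ℕ} (r : ℝ) (x : Euc d) :
    ∑' a : Fin d → ℤ, ENNReal.ofReal (cellAt r a x) = 1 := by
  obtain ⟨S, hS⟩ := cellAt_local r x
  obtain ⟨h0, h1⟩ := hS.self_of_nhds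
  rw [tsum_eq_sum (s := S) fun a ha => by rw [h0 a ha, ENNReal.ofReal_zero],
    ← ENNReal.ofReal_sum_of_nonneg fun a _ => cellAt_nonneg r a x, h1, ENNReal.ofReal_one]

lemma sum_lap_cellAt {d : ℕ} (r : ℝ) (x : Euc d) : ∃ S : Finset (Fin d → ℤ),
    (∀ a ∉ S, lap (cellAt r a) x = 0) ∧ ∑ a ∈ S, lap (cellAt r a) x = 0 := by
  obtain ⟨S, hS⟩ := cellAt_local r x
  refine ⟨S, fun a ha => ?_, ?_⟩
  · rw [lap_congr (g := fun _ => 0) (hS.mono fun y hy => hy.1 a ha), lap_const]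
  · rw [← lap_sum S _ (contDiff_cellAt r), lap_congr (g := fun _ => 1) (hS.mono fun y hy => hy.2),
      lap_const]

lemma integral_comp_cell {d : ℕ} {r : ℝ} (hr : 0 < r) (a : Fin d → ℤ) (g : Euc d → ℝ) :
    ∫ x : Euc d, g (r⁻¹ • x - latticePoint a) = r ^ d * ∫ x, g x := by
  rw [Measure.integral_comp_inv_smul_of_nonneg volume (fun x => g (x - latticePoint a)) hr.le,
    integral_sub_right_eq_self, finrank_euclideanSpace_fin, smul_eq_mul]

lemma integral_cellAt {d : ℕ} {r : ℝ} (hr : 0 < r) (a : Fin d → ℤ) :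
    ∫ x, cellAt r a x = r ^ d * ∫ x, cell d x :=
  integral_comp_cell hr a _

lemma integral_abs_lap_cellAt {d : ℕ} {r : ℝ} (hr : 0 < r) (a : Fin d → ℤ) :
    ∫ x, |lap (cellAt r a) x| = r ^ d * ((∫ x, |lap (cell d) x|) / r ^ 2) := by
  have h : ∀ x, |lap (cellAt r a) x| =
      (fun z => r⁻¹ ^ 2 * |lap (cell d) z|) (r⁻¹ • x - latticePoint a) := by
    intro x
    have : cellAt r a = fun y => cell d (r⁻¹ • y - latticePoint a) := rfl
    rw [this, lap_comp_affine, abs_mul, abs_of_nonneg (sq_nonneg _)]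
  simp_rw [h]
  rw [integral_comp_cell hr a fun z => r⁻¹ ^ 2 * |lap (cell d) z|, integral_const_mul]
  rw [inv_pow, div_eq_inv_mul]

/-- The lattice points whose bumps may overlap the bump at `a`. -/
def nbr {d : ℕ} (a : Fin d → ℤ) : Finset (Fin d → ℤ) :=
  Fintype.piFinset fun i => Finset.Icc (a i - 2) (a i + 2)

lemma mem_nbr {d : ℕ} {a b : Fin d → ℤ} : b ∈ nbr a ↔ ∀ i, a i - 2 ≤ b i ∧ b i ≤ a i + 2 := by
  simp [nbr]

lemma nbr_symm {d : ℕ} (a b : Fin d → ℤ) (h : b ∈ nbr a) : a ∈ nbr b :=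
  mem_nbr.2 fun i => by have := mem_nbr.1 h i; omega

lemma card_nbr {d : ℕ} (a : Fin d → ℤ) : (nbr a).card = 5 ^ d := by
  have : ∀ i, a i + 2 + 1 - (a i - 2) = 5 := fun i => by ring
  simp [nbr, this]

lemma mem_nbr_of_lap_ne_zero {d : ℕ} {r : ℝ} {a b : Fin d → ℤ} {x : Euc d}
    (ha : lap (cellAt r a) x ≠ 0) (hb : lap (cellAt r b) x ≠ 0) : b ∈ nbr a := by
  refine mem_nbr.2 fun i => ?_
  obtain ⟨h1, h2⟩ := mem_of_mem_tsupport_cellAt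
    (not_imp_comm.1 lap_eq_zero_of_notMem_tsupport ha) i
  obtain ⟨h3, h4⟩ := mem_of_mem_tsupport_cellAt
    (not_imp_comm.1 lap_eq_zero_of_notMem_tsupport hb) i
  constructor
  · have : ((a i - 2 : ℤ) : ℝ) ≤ b i := by push_cast; linarith
    exact Int.cast_le.1 this
  · have : (b i : ℝ) ≤ ((a i + 2 : ℤ) : ℝ) := by push_cast; linarith
    exact Int.cast_le.1 this

lemma dist_le_of_cellAt_pos {d : ℕ} {r : ℝ} (hr : 0 < r) {a b : Fin d → ℤ} (hb : b ∈ nbr a)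
    {x y : Euc d} (hx : 0 < cellAt r a x) (hy : 0 < cellAt r b y) :
    dist x y ≤ √d * (4 * r) := by
  refine dist_le_of_coord (by positivity) fun i => ?_
  obtain ⟨h1, h2⟩ := mem_of_cellAt_ne_zero hx.ne' i
  obtain ⟨h3, h4⟩ := mem_of_cellAt_ne_zero hy.ne' i
  obtain ⟨h5, h6⟩ := mem_nbr.1 hb i
  have h5' : (a i : ℝ) - 2 ≤ b i := by exact_mod_cast h5
  have h6' : (b i : ℝ) ≤ a i + 2 := by exact_mod_cast h6
  have e : x i - y i = r * (r⁻¹ * x i - r⁻¹ * y i) := by field_simp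
  rw [e, abs_mul, abs_of_pos hr, mul_comm]
  gcongr
  rw [abs_le]
  constructor <;> linarith

/-! ### Hall's condition from Green's identity -/

/-- For a family `D` with vanishing total sum, in which any two nonzero members are neighbours, the
sum over `A` and the sum over its neighbourhood are both carried by the outer boundary of `A`:
as soon as `D` is nonzero somewhere in `A`, the whole sum lives in the neighbourhood of `A`. -/
lemma abs_sum_le_boundary {ι : Type*} [DecidableEq ι] (N : ι → Finset ι)
    (D : ι → ℝ) (hD : ∀ a b, D a ≠ 0 → D b ≠ 0 → b ∈ N a)
    (hsum : ∃ S : Finset ι, (∀ a ∉ S, D a = 0) ∧ ∑ a ∈ S, D a = 0)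
    (A B : Finset ι) (hAB : A ⊆ B) (hB : A.biUnion N = B) :
    |∑ a ∈ A, D a| ≤ ∑ a ∈ B \ A, |D a| ∧ |∑ a ∈ B, D a| ≤ ∑ a ∈ B \ A, |D a| := by
  have hsplit : ∑ a ∈ B \ A, D a + ∑ a ∈ A, D a = ∑ a ∈ B, D a := Finset.sum_sdiff hAB
  have hle : |∑ a ∈ B \ A, D a| ≤ ∑ a ∈ B \ A, |D a| := Finset.abs_sum_le_sum_abs _ _
  by_cases h : ∀ a ∈ A, D a = 0
  · have h0 : ∑ a ∈ A, D a = 0 := Finset.sum_eq_zero h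
    rw [← hsplit, h0, add_zero, abs_zero]
    exact ⟨(abs_nonneg _).trans hle, hle⟩
  · push Not at h
    obtain ⟨a₀, ha₀, hne⟩ := h
    obtain ⟨S, hS, hS0⟩ := hsum
    have h0 : ∑ a ∈ B, D a = 0 := by
      rw [← hS0, Finset.sum_subset (Finset.subset_union_left : B ⊆ B ∪ S),
        Finset.sum_subset (Finset.subset_union_right : S ⊆ B ∪ S) fun a _ ha => hS a ha]
      intro a _ ha
      by_contra hne'
      exact ha (hB ▸ Finset.mem_biUnion.2 ⟨a₀, ha₀, hD a₀ a hne hne'⟩)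
    rw [h0] at hsplit ⊢
    rw [eq_neg_of_add_eq_zero_right hsplit, abs_neg, abs_zero]
    exact ⟨hle, (abs_nonneg _).trans hle⟩

/-- The bound on the transportation distance at every scale `r` for which `r ^ 2` dominates
`sup |u|`, up to a constant depending on the bump only. -/
lemma Tra_le_scale {d : ℕ} {u : Euc d → ℝ} (hu : ContDiff ℝ 2 u) (hpos : ∀ x, 0 ≤ lap u x + 1)
    {M r : ℝ} (hM : ∀ x, |u x| ≤ M) (hr : 0 < r)
    (hMr : M * ∫ x, |lap (cell d) x| ≤ r ^ 2 * ∫ x, cell d x) :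
    Tra (volume.withDensity fun x => ENNReal.ofReal (lap u x + 1)) volume ≤
      ENNReal.ofReal (√d * (4 * r)) := by
  classical
  set m₀ : ℝ := r ^ d * ∫ x, cell d x with hm₀
  have hm₀pos : 0 < m₀ := mul_pos (pow_pos hr d) (integral_cell_pos d)
  have hdens : Continuous fun x => lap u x + 1 := (continuous_lap hu).add continuous_const
  have hp : ∀ a : Fin d → ℤ, Continuous (cellAt r a) := fun a => (contDiff_cellAt r a).continuous
  have hpc : ∀ a : Fin d → ℤ, HasCompactSupport (cellAt r a) := hasCompactSupport_cellAt hr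
  have hpi : ∀ a : Fin d → ℤ, Integrable (cellAt r a) := fun a =>
    (hp a).integrable_of_hasCompactSupport (hpc a)
  have hupi : ∀ a : Fin d → ℤ, Integrable fun x => (lap u x + 1) * cellAt r a x := fun a =>
    (hdens.mul (hp a)).integrable_of_hasCompactSupport (hpc a).mul_left
  have hli : ∀ a : Fin d → ℤ, Integrable fun x => lap (cellAt r a) x := fun a =>
    (continuous_lap (contDiff_cellAt r a)).integrable_of_hasCompactSupport
      (hasCompactSupport_lap (hpc a))
  have huli : ∀ a : Fin d → ℤ, Integrable fun x => u x * lap (cellAt r a) x := fun a =>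
    (hu.continuous.mul (continuous_lap (contDiff_cellAt r a))).integrable_of_hasCompactSupport
      (hasCompactSupport_lap (hpc a)).mul_left
  let w : (Fin d → ℤ) → ℝ := fun a => (∫ x, (lap u x + 1) * cellAt r a x) / m₀
  have hw : ∀ a, 0 ≤ w a := fun a =>
    div_nonneg (integral_nonneg fun x => mul_nonneg (hpos x) (cellAt_nonneg r a x)) hm₀pos.le
  have hwm : ∀ a, w a * m₀ = ∫ x, (lap u x + 1) * cellAt r a x := fun a =>
    div_mul_cancel₀ _ hm₀pos.ne'
  have hw_eq : ∀ a, w a * m₀ = m₀ + ∫ x, u x * lap (cellAt r a) x := by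
    intro a
    have hli' : Integrable fun x => lap u x * cellAt r a x :=
      ((continuous_lap hu).mul (hp a)).integrable_of_hasCompactSupport (hpc a).mul_left
    rw [hwm, ← integral_lap_mul hu (contDiff_cellAt r a) (hpc a), hm₀, ← integral_cellAt hr a,
      ← integral_add (hpi a) hli']
    exact integral_congr_ae (Filter.Eventually.of_forall fun x => by ring)
  have hself : ∀ A : Finset (Fin d → ℤ), A ⊆ A.biUnion nbr := fun A a ha =>
    Finset.mem_biUnion.2 ⟨a, ha, mem_nbr.2 fun i => by omega⟩
  have hM0 : 0 ≤ M := (abs_nonneg _).trans (hM 0)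
  -- the discrepancy of a finite union of cells is at most the number of cells on its boundary
  have hdisc : ∀ T E : Finset (Fin d → ℤ),
      (∀ x, |∑ a ∈ T, lap (cellAt r a) x| ≤ ∑ a ∈ E, |lap (cellAt r a) x|) →
      |∑ a ∈ T, w a - T.card| ≤ E.card := by
    intro T E hTE
    have h1 : (∑ a ∈ T, w a - T.card) * m₀ = ∫ x, u x * ∑ a ∈ T, lap (cellAt r a) x := by
      simp_rw [Finset.mul_sum]
      rw [integral_finsetSum _ fun a _ => huli a, sub_mul, Finset.sum_mul,
        Finset.sum_congr rfl fun a _ => hw_eq a, Finset.sum_add_distrib, Finset.sum_const,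
        nsmul_eq_mul, add_sub_cancel_left]
    have h2 : |∫ x, u x * ∑ a ∈ T, lap (cellAt r a) x| ≤
        ∫ x, M * ∑ a ∈ E, |lap (cellAt r a) x| := by
      rw [← Real.norm_eq_abs]
      refine norm_integral_le_of_norm_le
        ((integrable_finsetSum E fun a _ => (hli a).abs).const_mul M)
        (Filter.Eventually.of_forall fun x => ?_)
      rw [norm_mul, Real.norm_eq_abs, Real.norm_eq_abs]
      exact mul_le_mul (hM x) (hTE x) (abs_nonneg _) hM0
    rw [integral_const_mul, integral_finsetSum E fun a _ => (hli a).abs,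
      Finset.sum_congr rfl fun a _ => integral_abs_lap_cellAt hr a, Finset.sum_const,
      nsmul_eq_mul] at h2
    have h3 : M * ((∫ x, |lap (cell d) x|) / r ^ 2) ≤ ∫ x, cell d x := by
      rw [← mul_div_assoc, div_le_iff₀ (pow_pos hr 2), mul_comm (∫ x, cell d x)]
      exact hMr
    have h4 : |∑ a ∈ T, w a - T.card| * m₀ ≤ E.card * m₀ := by
      rw [← abs_of_pos hm₀pos, ← abs_mul, abs_of_pos hm₀pos, h1]
      refine h2.trans ?_
      calc M * (E.card * (r ^ d * ((∫ x, |lap (cell d) x|) / r ^ 2)))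
          = E.card * (r ^ d * (M * ((∫ x, |lap (cell d) x|) / r ^ 2))) := by ring
        _ ≤ E.card * m₀ := by rw [hm₀]; gcongr
    exact le_of_mul_le_mul_right h4 hm₀pos
  have hbd : ∀ A : Finset (Fin d → ℤ), ∀ x,
      |∑ a ∈ A, lap (cellAt r a) x| ≤ ∑ a ∈ A.biUnion nbr \ A, |lap (cellAt r a) x| ∧
      |∑ a ∈ A.biUnion nbr, lap (cellAt r a) x| ≤
        ∑ a ∈ A.biUnion nbr \ A, |lap (cellAt r a) x| := fun A x =>
    abs_sum_le_boundary nbr _ (fun _ _ => mem_nbr_of_lap_ne_zero) (sum_lap_cellAt r x) A _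
      (hself A) rfl
  have hcard : ∀ A : Finset (Fin d → ℤ),
      ((A.biUnion nbr \ A).card : ℝ) = (A.biUnion nbr).card - A.card := fun A =>
    Finset.cast_card_sdiff (hself A)
  obtain ⟨f, hf, hfN, hrow, hcol⟩ := exists_flow_s3 nbr nbr_symm (5 ^ d) (fun a => (card_nbr a).le) w hw
    (fun A => by
      have := (abs_le.1 (hdisc A _ fun x => (hbd A x).1)).2
      rw [hcard] at this; linarith)
    (fun A => by
      have := (abs_le.1 (hdisc (A.biUnion nbr) _ fun x => (hbd A x).2)).1
      rw [hcard] at this; linarith)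
  have : IsLocallyFiniteMeasure
      ((volume : Measure (Euc d)).withDensity fun x => ENNReal.ofReal (lap u x + 1)) :=
    IsLocallyFiniteMeasure.withDensity_ofReal hdens
  refine Tra_le_of_flow nbr nbr_symm _ (cellAt r) hp (tsum_cellAt r) w m₀ hm₀pos hw ?_ ?_ f hf hfN
    hrow hcol _ fun a b hb x y => dist_le_of_cellAt_pos hr hb
  · intro a
    rw [lintegral_withDensity_eq_lintegral_mul _ hdens.measurable.ennreal_ofReal
      (hp a).measurable.ennreal_ofReal, hwm, ofReal_integral_eq_lintegral_ofReal (hupi a)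
      (Filter.Eventually.of_forall fun x => mul_nonneg (hpos x) (cellAt_nonneg r a x))]
    refine lintegral_congr fun x => ?_
    rw [Pi.mul_apply, ENNReal.ofReal_mul (hpos x)]
  · intro a
    rw [hm₀, ← integral_cellAt hr a, ofReal_integral_eq_lintegral_ofReal (hpi a)
      (Filter.Eventually.of_forall fun x => cellAt_nonneg r a x)]

/-- There is a constant `C > 0` depending only on `d` such that: if
`u : ℝ^d → ℝ` is `C²` with `Δu + 1 ≥ 0` everywhere and `ν` is the measure with density
`Δu + 1` w.r.t. Lebesgue measure (so `Δu = ν − m_d`), then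
`Tra(ν) ≤ C·√(sup |u|)`, the inequality read in `[0,∞]`. -/
theorem stmt_3 (d : ℕ) (hd : 1 ≤ d) :
    ∃ C : ℝ, 0 < C ∧
      ∀ u : Euc d → ℝ, ContDiff ℝ 2 u → (∀ x, 0 ≤ lap u x + 1) →
        Tra (volume.withDensity fun x => ENNReal.ofReal (lap u x + 1)) volume ≤
          ENNReal.ofReal C * (⨆ x : Euc d, ENNReal.ofReal |u x|) ^ (1 / 2 : ℝ) := by
  set κ : ℝ := (∫ x, |lap (cell d) x|) / ∫ x, cell d x with hκ
  have hκ0 : 0 ≤ κ := div_nonneg (integral_nonneg fun x => abs_nonneg _) (integral_cell_pos d).le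
  -- the summand `1` only serves to make `C` positive
  refine ⟨√d * (4 * √κ) + 1, by positivity, fun u hu hpos => ?_⟩
  set s : ℝ≥0∞ := ⨆ x : Euc d, ENNReal.ofReal |u x| with hs
  rcases eq_or_ne s ⊤ with htop | htop
  · rw [htop, ENNReal.top_rpow_of_pos (by norm_num), ENNReal.mul_top]
    · exact le_top
    · exact (ENNReal.ofReal_pos.2 (by positivity)).ne'
  have hM : ∀ x, |u x| ≤ s.toReal := fun x =>
    (ENNReal.ofReal_le_iff_le_toReal htop).1 (le_iSup (fun x => ENNReal.ofReal |u x|) x)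
  have hM0 : 0 ≤ s.toReal := ENNReal.toReal_nonneg
  have hsM : s ^ (1 / 2 : ℝ) = ENNReal.ofReal √s.toReal := by
    rw [Real.sqrt_eq_rpow, ← ENNReal.ofReal_rpow_of_nonneg hM0 (by norm_num),
      ENNReal.ofReal_toReal htop]
  have hdpos : 0 < √(d : ℝ) := Real.sqrt_pos.2 (by exact_mod_cast hd)
  -- every scale above `√(κ sup |u|)` is admissible; that scale itself may vanish
  refine ENNReal.le_of_forall_pos_le_add fun ε hε _ => ?_
  have hε' : (0 : ℝ) < ε := hε
  set r : ℝ := √κ * √s.toReal + ε / (√d * 4) with hr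
  have hr0 : 0 < r := by positivity
  refine (Tra_le_scale hu hpos hM hr0 ?_).trans ?_
  · have h1 : κ * s.toReal ≤ r ^ 2 := by
      calc κ * s.toReal = (√κ * √s.toReal) ^ 2 := by
            rw [mul_pow, Real.sq_sqrt hκ0, Real.sq_sqrt hM0]
        _ ≤ r ^ 2 := by
            refine pow_le_pow_left₀ (by positivity) ?_ 2
            rw [hr]; exact le_add_of_nonneg_right (by positivity)
    have h2 : ∫ x, |lap (cell d) x| = κ * ∫ x, cell d x :=
      (div_mul_cancel₀ _ (integral_cell_pos d).ne').symm
    rw [h2, ← mul_assoc, mul_comm s.toReal]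
    exact mul_le_mul_of_nonneg_right h1 (integral_cell_pos d).le
  · rw [hsM, ← ENNReal.ofReal_mul (by positivity), ← ENNReal.ofReal_coe_nnreal,
      ← ENNReal.ofReal_add (by positivity) hε'.le]
    refine ENNReal.ofReal_le_ofReal ?_
    have h3 : √d * (4 * r) = √d * (4 * √κ) * √s.toReal + ε := by
      rw [hr]; field_simp
    rw [h3, add_mul]
    have := Real.sqrt_nonneg s.toReal
    linarith
end
end
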